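/- arXiv:2605.15992 — 3 statements merged into one kernel-verified Lean document; each statement's English description precedes it below -/
import Mathlib

section
/- Let S be a polynomial ring over a field k, let x be a linear form and q, q' quadrics in S such that x, q, q' is a regular sequence, and let I ⊆ (x, q, q') be a homogeneous ideal of height 3 generated by n quadrics. Then pd_S(S/I) ≤ n. -/
open CategoryTheory Opposite

universe u

/-- The height of an ideal: the infimum of the heights (in the prime spectrum,
ordered by inclusion) of the primes containing it. -/
noncomputable def Ideal.heightENat {R : Type u} [CommRing R] (I : Ideal R) : ℕ∞ :=
  ⨅ (p : PrimeSpectrum R) (_ : I ≤ p.asIdeal), Order.height p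

/-- The projective dimension of an `R`-module `M`: the least `n` such that
`Ext^i(M, N) = 0` for all `i > n` and all modules `N` (and `⊤` if no such `n` exists). -/
noncomputable def projDim (R : Type u) [CommRing R] (M : Type u) [AddCommGroup M]
    [Module R M] : ℕ∞ :=
  sInf ((↑) '' {n : ℕ | ∀ i : ℕ, n < i → ∀ N : ModuleCat.{u} R,
    Subsingleton (((Ext R (ModuleCat.{u} R) i).obj (op (ModuleCat.of R M))).obj N)})

/-- The Hilbert function of the standard graded ring `S/J`, where
`S = k[x_1, ..., x_N]`: the `k`-dimension of the degree-`d` graded piece of `S/J`. -/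
noncomputable def hilbertFunction (k : Type u) [Field k] {N : ℕ}
    (J : Ideal (MvPolynomial (Fin N) k)) (d : ℕ) : ℕ :=
  Module.finrank k (Submodule.map (Ideal.Quotient.mkₐ k J).toLinearMap
    (MvPolynomial.homogeneousSubmodule (Fin N) k d))

open scoped Classical in
/-- The Hilbert–Samuel multiplicity `e(S/J)` of the graded ring `S/J`:
`(deg P)!` times the leading coefficient of the Hilbert polynomial `P` of `S/J`,
i.e. of the polynomial agreeing with the Hilbert function in all large degrees
(the degree of the Hilbert polynomial being `dim(S/J) - 1`). -/
noncomputable def hilbertSamuelMultiplicity (k : Type u) [Field k] {N : ℕ}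
    (J : Ideal (MvPolynomial (Fin N) k)) : ℚ :=
  if h : ∃ P : Polynomial ℚ, ∀ᶠ d : ℕ in Filter.atTop,
      (hilbertFunction k J d : ℚ) = P.eval (d : ℚ)
  then (h.choose.natDegree).factorial * h.choose.leadingCoeff
  else 0


/-- Vanishing of `Abelian.Ext` implies the bound on `projDim`. -/
lemma projDim_le_of_hasPD {R : Type u} [CommRing R] (M : Type u) [AddCommGroup M]
    [Module R M] (n : ℕ) (h : HasProjectiveDimensionLT (ModuleCat.of R M) (n + 1)) :
    projDim R M ≤ n := by
  refine sInf_le ⟨n, ?_, rfl⟩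
  intro i hi N
  let P : ProjectiveResolution (ModuleCat.of R M) := ProjectiveResolution.of _
  obtain ⟨j, rfl⟩ : ∃ j, i = j + 1 := ⟨i - 1, by omega⟩
  suffices Limits.IsZero (((Ext R (ModuleCat.{u} R) (j+1)).obj (op (ModuleCat.of R M))).obj N) from
    ModuleCat.subsingleton_of_isZero this
  refine Limits.IsZero.of_iso ?_ (P.isoExt (j+1) N)
  rw [← HomologicalComplex.exactAt_iff_isZero_homology,
    HomologicalComplex.exactAt_iff' _ j (j+1) (j+2) (by simp) (by simp),
    ShortComplex.moduleCat_exact_iff]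
  intro (x : P.complex.X (j+1) ⟶ N) hx
  have hx' : P.complex.d (j+2) (j+1) ≫ x = 0 := hx
  have h0 := Abelian.Ext.eq_zero_of_hasProjectiveDimensionLT (P.extMk x (j+2) rfl hx') (n+1) (by omega)
  rw [P.extMk_eq_zero_iff x (j+2) rfl hx' j rfl] at h0
  obtain ⟨g, hg⟩ := h0
  exact ⟨g, hg⟩

/-- `PD J d`: the projective dimension of `R/J` is at most `d`. -/
def PD {R : Type u} [CommRing R] (J : Ideal R) (d : ℕ) : Prop :=
  HasProjectiveDimensionLT (ModuleCat.of R (R ⧸ J)) (d + 1)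

lemma PD.mono {R : Type u} [CommRing R] {J : Ideal R} {d e : ℕ} (h : PD J d) (hde : d ≤ e) :
    PD J e := by
  have : HasProjectiveDimensionLT (ModuleCat.of R (R ⧸ J)) (d + 1) := h
  exact hasProjectiveDimensionLT_of_ge _ (d+1) (e+1) (by omega)

lemma PD_bot {R : Type u} [CommRing R] : PD (⊥ : Ideal R) 0 := by
  unfold PD
  have : Module.Projective R (R ⧸ (⊥ : Ideal R)) :=
    Module.Projective.of_equiv (Submodule.quotEquivOfEqBot (⊥ : Ideal R) rfl).symm
  have := ModuleCat.projective_of_module_projective (ModuleCat.of R (R ⧸ (⊥ : Ideal R)))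
  infer_instance

/-- The short exact sequence `0 → R/K → R/J → R/J' → 0`, with `K = J : x`, `J' = J + (x)`. -/
lemma exists_ses {R : Type u} [CommRing R] (J K J' : Ideal R) (x : R)
    (hK : ∀ t, t ∈ K ↔ x * t ∈ J) (hJ' : J' = Ideal.span {x} ⊔ J) :
    ∃ S : ShortComplex (ModuleCat.{u} R), S.ShortExact ∧ S.X₁ = ModuleCat.of R (R ⧸ K) ∧
      S.X₂ = ModuleCat.of R (R ⧸ J) ∧ S.X₃ = ModuleCat.of R (R ⧸ J') := by
  have hle : J ≤ J' := hJ' ▸ le_sup_right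
  let f : (R ⧸ K) →ₗ[R] (R ⧸ J) := Submodule.mapQ K J (LinearMap.lsmul R R x)
    (fun t ht => by simpa using (hK t).1 ht)
  let g : (R ⧸ J) →ₗ[R] (R ⧸ J') := Submodule.mapQ J J' LinearMap.id (fun t ht => hle ht)
  have hfg : g ∘ₗ f = 0 := by
    apply Submodule.linearMap_qext
    ext
    simp only [f, g, LinearMap.comp_apply, Submodule.mkQ_apply, Submodule.mapQ_apply,
      LinearMap.zero_apply]
    rw [Submodule.Quotient.mk_eq_zero, hJ']
    exact Ideal.mem_sup_left (by simp)
  refine ⟨ShortComplex.mk (ModuleCat.ofHom f) (ModuleCat.ofHom g) ?_, ?_, rfl, rfl, rfl⟩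
  · rw [← ModuleCat.ofHom_comp, hfg]; rfl
  · apply ModuleCat.shortComplex_shortExact
    · intro y
      constructor
      · obtain ⟨y, rfl⟩ := Submodule.Quotient.mk_surjective _ y
        intro hy
        have hy : Submodule.Quotient.mk (p := J') y = 0 := hy
        rw [Submodule.Quotient.mk_eq_zero, hJ', Ideal.mem_span_singleton_sup] at hy
        obtain ⟨a, b, hb, rfl⟩ := hy
        refine ⟨Submodule.Quotient.mk a, ?_⟩
        change Submodule.Quotient.mk (p := J) (x * a) = Submodule.Quotient.mk (a * x + b)
        rw [Submodule.Quotient.eq]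
        have : x * a - (a * x + b) = - b := by ring
        rw [this]
        exact J.neg_mem hb
      · rintro ⟨z, rfl⟩
        exact LinearMap.congr_fun hfg z
    · change Function.Injective f
      rw [← LinearMap.ker_eq_bot, LinearMap.ker_eq_bot']
      intro y hy
      obtain ⟨y, rfl⟩ := Submodule.Quotient.mk_surjective _ y
      have hy : Submodule.Quotient.mk (p := J) (x * y) = 0 := hy
      rw [Submodule.Quotient.mk_eq_zero] at hy ⊢
      exact (hK y).2 hy
    · change Function.Surjective g
      intro y
      obtain ⟨y, rfl⟩ := Submodule.Quotient.mk_surjective _ y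
      exact ⟨Submodule.Quotient.mk y, rfl⟩

lemma PD_mid {R : Type u} [CommRing R] (J K J' : Ideal R) (x : R)
    (hK : ∀ t, t ∈ K ↔ x * t ∈ J) (hJ' : J' = Ideal.span {x} ⊔ J) {d : ℕ}
    (h1 : PD K d) (h3 : PD J' d) : PD J d := by
  obtain ⟨S, hS, e1, e2, e3⟩ := exists_ses J K J' x hK hJ'
  unfold PD at *
  rw [← e1] at h1; rw [← e3] at h3; rw [← e2]
  exact hS.hasProjectiveDimensionLT_X₂ _ h1 h3

lemma PD_add {R : Type u} [CommRing R] (J : Ideal R) (x : R)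
    (hx : ∀ t, x * t ∈ J → t ∈ J) {d : ℕ} (h : PD J d) :
    PD (Ideal.span {x} ⊔ J) (d + 1) := by
  obtain ⟨S, hS, e1, e2, e3⟩ := exists_ses J J _ x
    (fun t => ⟨fun h => J.mul_mem_left _ h, hx t⟩) rfl
  unfold PD at *
  have h2 := h
  rw [← e1] at h; rw [← e2] at h2; rw [← e3]
  have := hasProjectiveDimensionLT_of_ge S.X₂ (d+1) (d+1+1) (by omega)
  exact hS.hasProjectiveDimensionLT_X₃ _ h this

/-- Krull: an ideal contained in a proper ideal generated by a finset has small height. -/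
lemma heightENat_le' {R : Type u} [CommRing R] [IsNoetherianRing R] (I : Ideal R)
    (s : Finset R) (h : I ≤ Ideal.span s) (hs : Ideal.span (s : Set R) ≠ ⊤) :
    (⨅ (p : PrimeSpectrum R) (_ : I ≤ p.asIdeal), Order.height p) ≤ s.card := by
  obtain ⟨p, hp⟩ := Ideal.nonempty_minimalPrimes hs
  have h1 := Ideal.height_le_card_of_mem_minimalPrimes_span_finset hp
  have := hp.isPrime
  refine (iInf₂_le (⟨p, this⟩ : PrimeSpectrum R) (h.trans hp.1.2)).trans ?_
  rw [← PrimeSpectrum.height_eq_orderHeight]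
  exact h1

lemma finsupp_degree_one {σ : Type} {d : σ →₀ ℕ} (h : Finsupp.degree d = 1) :
    ∃ i, d = Finsupp.single i 1 := by
  have h0 : d ≠ 0 := by rintro rfl; simp at h
  obtain ⟨i, hi⟩ := Finsupp.ne_iff.1 h0
  have hle : Finsupp.single i 1 ≤ d := by
    rw [Finsupp.single_le_iff]
    exact Nat.one_le_iff_ne_zero.2 hi
  obtain ⟨e, rfl⟩ := exists_add_of_le hle
  rw [map_add, Finsupp.degree_single] at h
  have he : Finsupp.degree e = 0 := by omega
  rw [Finsupp.degree_eq_zero_iff] at he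
  exact ⟨i, by rw [he, add_zero]⟩

lemma mem_two_iff {S R : Type*} [CommRing S] [CommRing R] (φ : S →+* R)
    (hφ : Function.Surjective φ) (a b t : S) :
    t ∈ Ideal.span {b} ⊔ (Ideal.span {a} ⊔ RingHom.ker φ) ↔
      ∃ u v : R, φ t = u * φ b + v * φ a := by
  rw [Ideal.mem_span_singleton_sup]
  constructor
  · rintro ⟨u, y, hy, rfl⟩
    rw [Ideal.mem_span_singleton_sup] at hy
    obtain ⟨v, z, hz, rfl⟩ := hy
    rw [RingHom.mem_ker] at hz
    exact ⟨φ u, φ v, by simp [hz]⟩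
  · rintro ⟨u, v, h⟩
    obtain ⟨u, rfl⟩ := hφ u
    obtain ⟨v, rfl⟩ := hφ v
    refine ⟨u, t - u * b, ?_, by ring⟩
    rw [Ideal.mem_span_singleton_sup]
    exact ⟨v, t - u * b - v * a, by simp [RingHom.mem_ker, h], by ring⟩

lemma mem_one_iff {S R : Type*} [CommRing S] [CommRing R] (φ : S →+* R)
    (hφ : Function.Surjective φ) (a t : S) :
    t ∈ Ideal.span {a} ⊔ RingHom.ker φ ↔ φ a ∣ φ t := by
  rw [Ideal.mem_span_singleton_sup]
  constructor
  · rintro ⟨v, z, hz, rfl⟩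
    rw [RingHom.mem_ker] at hz
    exact ⟨φ v, by simp [hz, mul_comm]⟩
  · rintro ⟨v, h⟩
    obtain ⟨v, rfl⟩ := hφ v
    exact ⟨v, t - v * a, by simp [RingHom.mem_ker, h, mul_comm], by ring⟩

lemma PD_two_aux {S : Type u} {R : Type*} [CommRing S] [CommRing R] [IsDomain R]
    [UniqueFactorizationMonoid R]
    (φ : S →+* R) (hφ : Function.Surjective φ) (d : ℕ) (h : PD (RingHom.ker φ) d) (q q' : S)
    (hq' : φ q' ≠ 0) :
    PD (Ideal.span {q} ⊔ (Ideal.span {q'} ⊔ RingHom.ker φ)) (d + 2) := by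
  obtain ⟨a', b', c', hrel, hca, hcb⟩ :=
    UniqueFactorizationMonoid.exists_reduced_factors (φ q') hq' (φ q)
  obtain ⟨a, rfl⟩ := hφ a'
  obtain ⟨b, rfl⟩ := hφ b'
  obtain ⟨c, rfl⟩ := hφ c'
  have hc : φ c ≠ 0 := fun h0 => hq' (by rw [← hca, h0, zero_mul])
  have ha : φ a ≠ 0 := fun h0 => hq' (by rw [← hca, h0, mul_zero])
  have reg : ∀ c : S, φ c ≠ 0 → ∀ t, c * t ∈ RingHom.ker φ → t ∈ RingHom.ker φ := by
    intro c hc t ht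
    rw [RingHom.mem_ker, map_mul] at ht
    exact (mul_eq_zero.1 ht).resolve_left hc
  have h1 : PD (Ideal.span {b} ⊔ (Ideal.span {a} ⊔ RingHom.ker φ)) (d + 1 + 1) := by
    refine PD_add _ _ ?_ (PD_add _ _ (reg a ha) h)
    intro t ht
    rw [mem_one_iff φ hφ] at ht ⊢
    rw [map_mul] at ht
    exact hrel.dvd_of_dvd_mul_left ht
  have h3 : PD (Ideal.span {c} ⊔ RingHom.ker φ) (d + 2) := (PD_add _ _ (reg c hc) h).mono (by omega)
  refine PD_mid _ _ _ c ?_ ?_ h1 h3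
  · intro t
    rw [mem_two_iff φ hφ, mem_two_iff φ hφ, ← hca, ← hcb, map_mul]
    constructor
    · rintro ⟨u, v, e⟩
      exact ⟨u, v, by rw [e]; ring⟩
    · rintro ⟨u, v, e⟩
      exact ⟨u, v, mul_left_cancel₀ hc (by rw [e]; ring)⟩
  · have m1 : q ∈ Ideal.span {c} ⊔ RingHom.ker φ := (mem_one_iff φ hφ _ _).2 ⟨_, hcb.symm⟩
    have m2 : q' ∈ Ideal.span {c} ⊔ RingHom.ker φ := (mem_one_iff φ hφ _ _).2 ⟨_, hca.symm⟩
    apply le_antisymm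
    · exact sup_le_sup_left (le_sup_right.trans le_sup_right) _
    · refine sup_le le_sup_left (sup_le ?_ (sup_le ?_ le_sup_right))
      · rwa [Ideal.span_singleton_le_iff_mem]
      · rwa [Ideal.span_singleton_le_iff_mem]

/-- Two extra generators over a UFD quotient cost at most two. -/
lemma PD_two {S : Type u} {R : Type*} [CommRing S] [CommRing R] [IsDomain R]
    [UniqueFactorizationMonoid R]
    (φ : S →+* R) (hφ : Function.Surjective φ) (d : ℕ) (h : PD (RingHom.ker φ) d) (q q' : S) :
    PD (Ideal.span {q} ⊔ (Ideal.span {q'} ⊔ RingHom.ker φ)) (d + 2) := by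
  by_cases h1 : φ q' = 0
  · by_cases h2 : φ q = 0
    · have e : Ideal.span {q} ⊔ (Ideal.span {q'} ⊔ RingHom.ker φ) = RingHom.ker φ := by
        refine le_antisymm (sup_le ?_ (sup_le ?_ le_rfl)) (le_sup_right.trans le_sup_right)
        · rwa [Ideal.span_singleton_le_iff_mem]
        · rwa [Ideal.span_singleton_le_iff_mem]
      rw [e]
      exact h.mono (by omega)
    · rw [sup_left_comm]
      exact PD_two_aux φ hφ d h q' q h2
  · exact PD_two_aux φ hφ d h q q' h1

open MvPolynomial in
lemma linear_induction {k : Type u} [Field k] {σ : Type} (P : MvPolynomial σ k → Prop)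
    (hX : ∀ c i, P (C c * X i)) (hadd : ∀ p q, P p → P q → P (p + q)) (h0 : P 0)
    (p : MvPolynomial σ k) (hp : p.IsHomogeneous 1) : P p := by
  rw [p.as_sum]
  apply Finset.sum_induction _ P hadd h0
  intro d hd
  have h1 := hp (mem_support_iff.1 hd)
  replace h1 : Finsupp.degree d = 1 := by
    rw [Finsupp.degree_eq_weight_one]; exact h1
  replace h1 := finsupp_degree_one h1
  obtain ⟨i, rfl⟩ := h1
  rw [← C_mul_X_eq_monomial]
  exact hX _ _

open MvPolynomial in
lemma linear_step {k : Type u} [Field k] {σ : Type} (l : MvPolynomial σ k)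
    (hl : l.IsHomogeneous 1) (hl0 : l ≠ 0) :
    ∃ (τ : Type) (ψ : MvPolynomial σ k →ₐ[k] MvPolynomial τ k), Function.Surjective ψ ∧
      RingHom.ker (ψ : MvPolynomial σ k →+* MvPolynomial τ k) = Ideal.span {l} ∧
      ∀ p, p.IsHomogeneous 1 → (ψ p).IsHomogeneous 1 := by
  classical
  obtain ⟨d, hd⟩ := MvPolynomial.exists_coeff_ne_zero hl0
  have h1 := hl hd
  replace h1 : Finsupp.degree d = 1 := by
    rw [Finsupp.degree_eq_weight_one]; exact h1
  replace h1 := finsupp_degree_one h1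
  obtain ⟨j, rfl⟩ := h1
  set c := coeff (Finsupp.single j 1) l with hc
  let ρ : MvPolynomial σ k →ₐ[k] MvPolynomial {i // i ≠ j} k :=
    aeval (fun i => if h : i = j then 0 else X ⟨i, h⟩)
  let ψ : MvPolynomial σ k →ₐ[k] MvPolynomial {i // i ≠ j} k :=
    aeval (fun i => if h : i = j then - (C c⁻¹ * ρ l) else X ⟨i, h⟩)
  let ι : MvPolynomial {i // i ≠ j} k →ₐ[k] MvPolynomial σ k := rename Subtype.val
  have hρh : ∀ p : MvPolynomial σ k, p.IsHomogeneous 1 → (ρ p).IsHomogeneous 1 := by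
    intro p hp
    have := hp.aeval (n := 1)
      (fun i => if h : i = j then 0 else X (R := k) (⟨i, h⟩ : {i // i ≠ j}))
      (by intro i; split_ifs with h
          · exact isHomogeneous_zero _ _ _
          · exact isHomogeneous_X _ _)
    rw [mul_one] at this
    exact this
  have e1 : ∀ p : MvPolynomial σ k, p.IsHomogeneous 1 →
      ψ p = ρ p - C (coeff (Finsupp.single j 1) p * c⁻¹) * ρ l := by
    apply linear_induction
    · intro a i
      by_cases h : i = j
      · subst h
        simp [ψ, ρ, MvPolynomial.algebraMap_eq, mul_assoc]
      · have h' : Finsupp.single i 1 ≠ Finsupp.single j 1 := by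
          intro h2; exact h (Finsupp.single_left_injective one_ne_zero h2)
        simp [ψ, ρ, h, coeff_C_mul, coeff_X, h']
    · intro p q hp hq
      simp only [map_add, hp, hq, coeff_add, add_mul]
      ring
    · simp
  have e2 : ∀ p : MvPolynomial σ k, p.IsHomogeneous 1 →
      p = ι (ρ p) + C (coeff (Finsupp.single j 1) p) * X j := by
    apply linear_induction
    · intro a i
      by_cases h : i = j
      · subst h
        simp [ι, ρ]
      · have h' : Finsupp.single i 1 ≠ Finsupp.single j 1 := by
          intro h2; exact h (Finsupp.single_left_injective one_ne_zero h2)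
        simp [ι, ρ, h, coeff_C_mul, coeff_X, h', MvPolynomial.algebraMap_eq]
    · intro p q hp hq
      conv_lhs => rw [hp, hq]
      simp only [map_add, coeff_add]
      ring
    · simp
  have hψl : ψ l = 0 := by
    rw [e1 l hl, ← hc, mul_inv_cancel₀ hd]; simp
  have hψι : ∀ p, ψ (ι p) = p := by
    intro p
    have : ψ.comp ι = AlgHom.id k _ := by
      ext i
      simp [ψ, ι, i.2]
    exact DFunLike.congr_fun this p
  refine ⟨_, ψ, fun p => ⟨ι p, hψι p⟩, ?_, ?_⟩
  · apply le_antisymm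
    · intro p hp
      have hp : ψ p = 0 := hp
      have : (Ideal.Quotient.mkₐ k (Ideal.span {l})).comp (ι.comp ψ) =
          Ideal.Quotient.mkₐ k (Ideal.span {l}) := by
        ext i
        by_cases h : i = j
        · subst h
          simp only [AlgHom.comp_apply, Ideal.Quotient.mkₐ_eq_mk]
          rw [Ideal.Quotient.eq, Ideal.mem_span_singleton]
          refine ⟨- C c⁻¹, ?_⟩
          have h2 := e2 l hl
          rw [← hc] at h2
          have h3 : ι (ψ (X i)) = - (C c⁻¹ * ι (ρ l)) := by
            simp [ψ, ι]
          have h4 : (C c * C c⁻¹ : MvPolynomial σ k) = 1 := by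
            rw [← C_mul, mul_inv_cancel₀ hd, C_1]
          rw [h3]
          linear_combination C c⁻¹ * h2 + X i * h4
        · simp [ι, ψ, h]
      have h5 := DFunLike.congr_fun this p
      simp only [AlgHom.comp_apply, hp, map_zero] at h5
      exact Ideal.Quotient.eq_zero_iff_mem.1 h5.symm
    · rw [Ideal.span_singleton_le_iff_mem]
      exact hψl
  · intro p hp
    rw [e1 p hp]
    refine IsHomogeneous.sub ?_ ?_
    · exact hρh p hp
    · have := (isHomogeneous_C {i // i ≠ j} (coeff (Finsupp.single j 1) p * c⁻¹)).mul (hρh l hl)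
      rw [zero_add] at this
      exact this

/-- Quotients by linear forms are polynomial rings, and have the expected pd bound. -/
lemma linear_main {k : Type u} [Field k] {σ ι : Type} (l : ι → MvPolynomial σ k)
    (hl : ∀ i, (l i).IsHomogeneous 1) (s : Finset ι) :
    ∃ (τ : Type) (φ : MvPolynomial σ k →ₐ[k] MvPolynomial τ k), Function.Surjective φ ∧
      RingHom.ker (φ : MvPolynomial σ k →+* MvPolynomial τ k) = Ideal.span (l '' s) ∧
      (∀ p, p.IsHomogeneous 1 → (φ p).IsHomogeneous 1) ∧
      PD (RingHom.ker (φ : MvPolynomial σ k →+* MvPolynomial τ k)) s.card := by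
  classical
  induction s using Finset.induction_on with
  | empty =>
    have e : RingHom.ker (AlgHom.id k (MvPolynomial σ k) : MvPolynomial σ k →+* MvPolynomial σ k) = ⊥ := by
      rw [← RingHom.injective_iff_ker_eq_bot]
      exact fun a b h => h
    refine ⟨σ, AlgHom.id k _, Function.surjective_id, ?_, fun p hp => hp, ?_⟩
    · rw [e]; simp
    · rw [e]; exact PD_bot
  | insert a s ha ih =>
    obtain ⟨τ, φ, hs, hk, hh, hpd⟩ := ih
    have hspan : Ideal.span (l '' ↑(insert a s)) =
        Ideal.span {l a} ⊔ RingHom.ker (φ : MvPolynomial σ k →+* MvPolynomial τ k) := by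
      rw [hk, ← Ideal.span_union, Finset.coe_insert, Set.image_insert_eq, Set.insert_eq]
    rw [Finset.card_insert_of_notMem ha, hspan]
    by_cases h0 : φ (l a) = 0
    · refine ⟨τ, φ, hs, ?_, hh, hpd.mono (by omega)⟩
      symm
      rw [sup_eq_right, Ideal.span_singleton_le_iff_mem]
      exact h0
    · obtain ⟨τ', ψ, hs', hk', hh'⟩ := linear_step (φ (l a)) (hh _ (hl a)) h0
      have hker : RingHom.ker (ψ.comp φ : MvPolynomial σ k →+* MvPolynomial τ' k) =
          Ideal.span {l a} ⊔ RingHom.ker (φ : MvPolynomial σ k →+* MvPolynomial τ k) := by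
        ext t
        rw [mem_one_iff (φ : MvPolynomial σ k →+* MvPolynomial τ k) hs]
        have : t ∈ RingHom.ker (ψ.comp φ : MvPolynomial σ k →+* MvPolynomial τ' k) ↔
          φ t ∈ RingHom.ker (ψ : MvPolynomial τ k →+* MvPolynomial τ' k) := Iff.rfl
        rw [this, hk', Ideal.mem_span_singleton]
        rfl
      refine ⟨τ', ψ.comp φ, hs'.comp hs, hker, fun p hp => hh' _ (hh _ hp), ?_⟩
      rw [hker]
      refine PD_add _ _ ?_ hpd
      intro t ht
      have ht : φ (l a * t) = 0 := ht
      rw [map_mul] at ht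
      exact (mul_eq_zero.1 ht).resolve_left h0

open MvPolynomial in
lemma quadric_decomp {k : Type u} [Field k] {N : ℕ} (x q q' f : MvPolynomial (Fin N) k)
    (hx : x.IsHomogeneous 1) (hq : q.IsHomogeneous 2) (hq' : q'.IsHomogeneous 2)
    (hf : f.IsHomogeneous 2) (h : f ∈ Ideal.span {x, q, q'}) :
    ∃ (l : MvPolynomial (Fin N) k) (a b : k), l.IsHomogeneous 1 ∧
      f = l * x + C a * q + C b * q' := by
  rw [Ideal.mem_span_insert] at h
  obtain ⟨A, z, hz, rfl⟩ := h
  rw [Ideal.mem_span_pair] at hz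
  obtain ⟨B, D, rfl⟩ := hz
  refine ⟨homogeneousComponent 1 A, coeff 0 B, coeff 0 D, homogeneousComponent_isHomogeneous _ _, ?_⟩
  have key : ∀ (i j : ℕ) (P y : MvPolynomial (Fin N) k), y.IsHomogeneous j →
      homogeneousComponent (i + j) (P * y) = homogeneousComponent i P * y := by
    intro i j P y hy
    let _ : GradedAlgebra (homogeneousSubmodule (Fin N) k) := MvPolynomial.gradedAlgebra
    have := DirectSum.coe_decompose_mul_add_of_right_mem (homogeneousSubmodule (Fin N) k)
      (i := i) (a := P) (b := y) ((mem_homogeneousSubmodule j y).2 hy)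
    have hd : ∀ (p : MvPolynomial (Fin N) k) (m : ℕ),
        (DirectSum.decompose (homogeneousSubmodule (Fin N) k) p m : MvPolynomial (Fin N) k) =
          homogeneousComponent m p := fun p m => decomposition.decompose'_apply p m
    rwa [hd, hd] at this
  have e := homogeneousComponent_eq_self hf
  rw [map_add, map_add, key 1 1 A x hx, show (2 : ℕ) = 0 + 2 from rfl, key 0 2 B q hq,
    key 0 2 D q' hq', homogeneousComponent_zero, homogeneousComponent_zero] at e
  rw [← e]
  ring

lemma koszul {S : Type u} [CommRing S] [IsDomain S] (x q q' : S) (hx0 : x ≠ 0)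
    (h1 : ∀ t, q * t ∈ Ideal.span {x} → t ∈ Ideal.span {x})
    (h2 : ∀ t, q' * t ∈ Ideal.span {x, q} → t ∈ Ideal.span {x, q})
    (l1 l2 a b c d D' q1 q2 : S) (hD : (a * d - b * c) * D' = 1)
    (hq1 : q1 = l1 * x + a * q + b * q') (hq2 : q2 = l2 * x + c * q + d * q')
    (u v T : S) (h : x * T = u * q1 + v * q2) : ∃ A B, T = A * q1 + B * q2 := by
  have m2 : u * b + v * d ∈ Ideal.span {x, q} := by
    apply h2
    rw [Ideal.mem_span_pair]
    refine ⟨T - u * l1 - v * l2, -(u * a + v * c), ?_⟩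
    rw [hq1, hq2] at h
    linear_combination h
  rw [Ideal.mem_span_pair] at m2
  obtain ⟨γ, τ, e2⟩ := m2
  have m1 : u * a + v * c + τ * q' ∈ Ideal.span {x} := by
    apply h1
    rw [Ideal.mem_span_singleton]
    refine ⟨T - u * l1 - v * l2 - γ * q', ?_⟩
    rw [hq1, hq2] at h
    linear_combination -h + q' * e2
  rw [Ideal.mem_span_singleton] at m1
  obtain ⟨δ, e1⟩ := m1
  refine ⟨D' * (d * δ - c * γ + τ * l2), D' * (a * γ - b * δ - τ * l1), ?_⟩
  apply mul_left_cancel₀ hx0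
  have eu : (a * d - b * c) * u = x * (d * δ - c * γ + τ * l2) - τ * q2 := by
    rw [hq2]; linear_combination d * e1 + c * e2
  have ev : (a * d - b * c) * v = x * (a * γ - b * δ - τ * l1) + τ * q1 := by
    rw [hq1]; linear_combination - b * e1 - a * e2
  linear_combination h + D' * q1 * eu + D' * q2 * ev - (u * q1 + v * q2) * hD

lemma regular_extract {S : Type u} [CommRing S] (x q q' : S)
    (hreg : RingTheory.Sequence.IsRegular S [x, q, q']) :
    x ≠ 0 ∧ (∀ t, q * t ∈ Ideal.span {x} → t ∈ Ideal.span {x}) ∧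
    (∀ t, q' * t ∈ Ideal.span {x, q} → t ∈ Ideal.span {x, q}) ∧
    Ideal.span {x, q, q'} ≠ ⊤ := by
  have ht := hreg.top_ne_smul
  have hr := hreg.regular_mod_prev
  have htop : Ideal.span {x, q, q'} ≠ ⊤ := by
    intro h
    apply ht
    have : Ideal.ofList [x, q, q'] = ⊤ := by
      rw [← h]; simp [Ideal.ofList_cons, Ideal.span_insert, Ideal.ofList_nil]
    rw [this]; simp
  have r0 := hr 0 (by simp)
  have r1 := hr 1 (by simp)
  have r2 := hr 2 (by simp)
  rw [isSMulRegular_quotient_iff_mem_of_smul_mem] at r0 r1 r2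
  simp only [List.take, Ideal.ofList_cons, Ideal.ofList_nil, smul_eq_mul, Ideal.mul_top,
    List.getElem_cons_zero, List.getElem_cons_succ, sup_bot_eq] at r0 r1 r2
  refine ⟨?_, r1, ?_, htop⟩
  · rintro rfl
    have := r0 1 (by simp)
    have h1 : (1 : S) = 0 := by simpa using this
    apply htop
    rw [Ideal.eq_top_iff_one, h1]
    exact Ideal.zero_mem _
  · rw [Ideal.span_insert]
    exact r2

open MvPolynomial

theorem pd_le_of_contained_in_linear_CI (k : Type u) [Field k] (N : ℕ) (n : ℕ)
    (x q q' : MvPolynomial (Fin N) k)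
    (hx : x.IsHomogeneous 1) (hq : q.IsHomogeneous 2) (hq' : q'.IsHomogeneous 2)
    (hreg : RingTheory.Sequence.IsRegular (MvPolynomial (Fin N) k) [x, q, q'])
    (f : Fin n → MvPolynomial (Fin N) k)
    (hf : ∀ i, (f i).IsHomogeneous 2)
    (I : Ideal (MvPolynomial (Fin N) k))
    (hI : I = Ideal.span (Set.range f))
    (hsub : I ≤ Ideal.span {x, q, q'})
    (hht : I.heightENat = 3) :
    projDim (MvPolynomial (Fin N) k) (MvPolynomial (Fin N) k ⧸ I) ≤ (n : ℕ∞) := by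
  classical
  obtain ⟨hx0, hr1, hr2, htop⟩ := regular_extract x q q' hreg
  have hfI : ∀ m, f m ∈ I := fun m => hI ▸ Ideal.subset_span ⟨m, rfl⟩
  -- Krull's height theorem
  have krull : ∀ s : Finset (MvPolynomial (Fin N) k), I ≤ Ideal.span s →
      Ideal.span (s : Set (MvPolynomial (Fin N) k)) ≤ Ideal.span {x, q, q'} → 3 ≤ s.card := by
    intro s h1 h2
    have h3 := heightENat_le' I s h1 (fun h => htop (top_le_iff.1 (h ▸ h2)))
    have h4 : (3 : ℕ∞) ≤ s.card := hht ▸ h3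
    exact_mod_cast h4
  have hn3 : 3 ≤ n := by
    have := krull (Finset.univ.image f) (by simp [hI]) (by simpa [← hI] using hsub)
    exact this.trans (Finset.card_image_le.trans (by simp))
  choose l a b hl hfe using fun m =>
    quadric_decomp x q q' (f m) hx hq hq' (hf m) (hsub (hfI m))
  have hxm : x ∈ Ideal.span {x, q, q'} := Ideal.subset_span (by simp)
  -- no two-generated ideal `(x, g)` contains `I`
  have nog : ∀ g ∈ Ideal.span {x, q, q'}, ¬ ∀ m, f m ∈ Ideal.span {x, g} := by
    intro g hg h
    have := krull {x, g} (by
        rw [hI, Ideal.span_le]; rintro _ ⟨m, rfl⟩; simpa using h m) (by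
        rw [Ideal.span_le]; intro y hy
        simp only [Finset.coe_insert, Finset.coe_singleton, Set.mem_insert_iff,
          Set.mem_singleton_iff] at hy
        rcases hy with rfl | rfl
        · exact hxm
        · exact hg)
    have h2 := Finset.card_le_two (a := x) (b := g)
    omega
  obtain ⟨i, j, hD⟩ : ∃ i j, a i * b j - b i * a j ≠ 0 := by
    by_contra! hcon
    by_cases hall : ∃ i, a i ≠ 0 ∨ b i ≠ 0
    · obtain ⟨i, hi⟩ := hall
      refine nog (f i) (hsub (hfI i)) (fun m => ?_)
      obtain ⟨s, hs1, hs2⟩ : ∃ s, a m = s * a i ∧ b m = s * b i := by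
        have h := hcon i m
        rcases hi with hi | hi
        · refine ⟨a m / a i, by field_simp, ?_⟩
          field_simp
          linear_combination h
        · refine ⟨b m / b i, ?_, by field_simp⟩
          field_simp
          linear_combination -h
      rw [Ideal.mem_span_pair]
      refine ⟨l m - C s * l i, C s, ?_⟩
      rw [hfe m, hfe i, hs1, hs2, C_mul, C_mul]
      ring
    · push Not at hall
      refine nog 0 (Ideal.zero_mem _) (fun m => ?_)
      rw [Ideal.mem_span_pair]
      refine ⟨l m, 0, ?_⟩
      rw [hfe m, (hall m).1, (hall m).2]
      simp
  set D := a i * b j - b i * a j with hDdef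
  have hij : i ≠ j := by
    rintro rfl
    exact hD (by rw [hDdef]; ring)
  let s : Fin n → k := fun m => (a m * b j - b m * a j) * D⁻¹
  let t : Fin n → k := fun m => (a i * b m - b i * a m) * D⁻¹
  let l' : Fin n → MvPolynomial (Fin N) k := fun m => l m - C (s m) * l i - C (t m) * l j
  have hl' : ∀ m, (l' m).IsHomogeneous 1 := by
    intro m
    refine ((hl m).sub ?_).sub ?_
    · simpa using (isHomogeneous_C _ (s m)).mul (hl i)
    · simpa using (isHomogeneous_C _ (t m)).mul (hl j)
  have hDinv : D * D⁻¹ = 1 := mul_inv_cancel₀ hD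
  have hfm : ∀ m, f m = C (s m) * f i + C (t m) * f j + x * l' m := by
    intro m
    have ea : a m = s m * a i + t m * a j := by
      simp only [s, t]
      linear_combination - a m * hDinv + a m * D⁻¹ * hDdef
    have eb : b m = s m * b i + t m * b j := by
      simp only [s, t]
      linear_combination - b m * hDinv + b m * D⁻¹ * hDdef
    have ea' := congrArg (C (σ := Fin N)) ea
    have eb' := congrArg (C (σ := Fin N)) eb
    simp only [C_add, C_mul] at ea' eb'
    simp only [l']
    rw [hfe m, hfe i, hfe j]
    linear_combination q * ea' + q' * eb'
  let T : Finset (Fin n) := Finset.univ \ {i, j}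
  have hT : T.card + 2 = n := by
    have h1 : ({i, j} : Finset (Fin n)).card = 2 := Finset.card_pair hij
    have h2 := Finset.card_sdiff_add_card_eq_card (Finset.subset_univ ({i, j} : Finset (Fin n)))
    rw [h1] at h2
    simpa [T] using h2
  obtain ⟨τ, φ, hφs, hφk, -, hφpd⟩ := linear_main l' hl' T
  obtain ⟨τ₂, φ₂, hφ₂s, hφ₂k, -, hφ₂pd⟩ := linear_main (fun _ : Unit => x) (fun _ => hx) {()}
  have P1 := PD_two (φ : MvPolynomial (Fin N) k →+* MvPolynomial τ k) hφs _ hφpd (f i) (f j)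
  have P3 := PD_two (φ₂ : MvPolynomial (Fin N) k →+* MvPolynomial τ₂ k) hφ₂s _ hφ₂pd (f i) (f j)
  rw [hT] at P1
  replace P3 := P3.mono (e := n) (by simpa using hn3)
  rw [hφk] at P1
  rw [hφ₂k] at P3
  simp only [Finset.coe_singleton, Set.image_singleton] at P3
  apply projDim_le_of_hasPD
  change PD I n
  refine PD_mid I _ _ x ?_ ?_ P1 P3
  · intro y
    constructor
    · intro hy
      rw [Ideal.mem_span_singleton_sup] at hy
      obtain ⟨u, z, hz, rfl⟩ := hy
      rw [Ideal.mem_span_singleton_sup] at hz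
      obtain ⟨v, w, hw, rfl⟩ := hz
      have hxw : x * w ∈ I := by
        have : Ideal.span (l' '' T) ≤ Submodule.comap (LinearMap.lsmul _ _ x) I := by
          rw [Ideal.span_le]
          rintro _ ⟨m, -, rfl⟩
          change x * l' m ∈ I
          have e : x * l' m = f m - C (s m) * f i - C (t m) * f j := by
            linear_combination - hfm m
          rw [e]
          exact I.sub_mem (I.sub_mem (hfI m) (I.mul_mem_left _ (hfI i))) (I.mul_mem_left _ (hfI j))
        exact this hw
      have e : x * (u * f i + (v * f j + w)) = x * u * f i + x * v * f j + x * w := by ring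
      rw [e]
      exact I.add_mem (I.add_mem (I.mul_mem_left _ (hfI i)) (I.mul_mem_left _ (hfI j))) hxw
    · intro hy
      have hle : I ≤ Ideal.span {f i} ⊔ (Ideal.span {f j} ⊔ Ideal.span {x} *
          Ideal.span (l' '' T)) := by
        have mi : f i ∈ Ideal.span {f i} ⊔ (Ideal.span {f j} ⊔ Ideal.span {x} *
          Ideal.span (l' '' T)) := Ideal.mem_sup_left (Ideal.mem_span_singleton_self _)
        have mj : f j ∈ Ideal.span {f i} ⊔ (Ideal.span {f j} ⊔ Ideal.span {x} *
          Ideal.span (l' '' T)) :=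
            Ideal.mem_sup_right (Ideal.mem_sup_left (Ideal.mem_span_singleton_self _))
        conv_lhs => rw [hI]
        rw [Ideal.span_le]
        rintro _ ⟨m, rfl⟩
        by_cases h1 : m = i
        · rw [h1]; exact mi
        by_cases h2 : m = j
        · rw [h2]; exact mj
        have hmT : m ∈ T := by simp [T, h1, h2]
        rw [hfm m]
        refine Ideal.add_mem _ (Ideal.add_mem _ (Ideal.mul_mem_left _ _ mi)
          (Ideal.mul_mem_left _ _ mj)) ?_
        exact Ideal.mem_sup_right (Ideal.mem_sup_right (Ideal.mul_mem_mul
          (Ideal.mem_span_singleton_self _) (Ideal.subset_span ⟨m, hmT, rfl⟩)))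
      have h := hle hy
      rw [Ideal.mem_span_singleton_sup] at h
      obtain ⟨u, z, hz, e1⟩ := h
      rw [Ideal.mem_span_singleton_sup] at hz
      obtain ⟨v, w', hw', rfl⟩ := hz
      rw [Ideal.mem_span_singleton_mul] at hw'
      obtain ⟨w, hw, rfl⟩ := hw'
      have hDC : (C (a i) * C (b j) - C (b i) * C (a j)) * C (D⁻¹) =
          (1 : MvPolynomial (Fin N) k) := by
        rw [← C_mul, ← C_mul, ← C_sub, ← C_mul, ← hDdef, hDinv, C_1]
      obtain ⟨A, B, hAB⟩ := koszul x q q' hx0 hr1 hr2 (l i) (l j) (C (a i)) (C (b i)) (C (a j))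
        (C (b j)) (C D⁻¹) (f i) (f j) hDC (hfe i) (hfe j) u v (y - w) (by linear_combination - e1)
      rw [Ideal.mem_span_singleton_sup]
      refine ⟨A, B * f j + w, ?_, by linear_combination - hAB⟩
      rw [Ideal.mem_span_singleton_sup]
      exact ⟨B, w, hw, rfl⟩
  · apply le_antisymm
    · refine sup_le ?_ (sup_le ?_ le_sup_left)
      · rw [Ideal.span_singleton_le_iff_mem]; exact Ideal.mem_sup_right (hfI i)
      · rw [Ideal.span_singleton_le_iff_mem]; exact Ideal.mem_sup_right (hfI j)
    · refine sup_le (le_sup_right.trans le_sup_right) ?_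
      conv_lhs => rw [hI]
      rw [Ideal.span_le]
      rintro _ ⟨m, rfl⟩
      rw [hfm m]
      refine Ideal.add_mem _ (Ideal.add_mem _ (Ideal.mul_mem_left _ _
        (Ideal.mem_sup_left (Ideal.mem_span_singleton_self _)))
        (Ideal.mul_mem_left _ _ (Ideal.mem_sup_right (Ideal.mem_sup_left
        (Ideal.mem_span_singleton_self _))))) ?_
      exact Ideal.mul_mem_right _ _ (Ideal.mem_sup_right (Ideal.mem_sup_right
        (Ideal.mem_span_singleton_self _)))
end

section
/- Let k be an algebraically closed field, S a polynomial ring over k, and p ⊆ S a graded prime ideal with height(p) = 3 and Hilbert–Samuel multiplicity e(S/p) = 5. If p contains a homogeneous ideal of height 3 generated by quadrics, then p is nondegenerate, i.e., p contains no nonzero linear form. -/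
open CategoryTheory Opposite

universe u

attribute [local instance] MvPolynomial.gradedAlgebra


theorem aux_indep_variables (k : Type u) [Field k] (σ : Type) [Finite σ] :
    ∀ (P : Ideal (MvPolynomial σ k)), P.IsPrime →
      ∃ (τ : Type) (_ : Finite τ) (j : τ → σ),
        (∀ f : MvPolynomial τ k, MvPolynomial.rename j f ∈ P → f = 0) ∧
        (Nat.card σ : ℕ∞) ≤ Nat.card τ + P.height := by
  induction σ using Finite.induction_empty_option with
  | @of_equiv α β e H =>
    intro P hP
    let E := (MvPolynomial.renameEquiv k e).toRingEquiv
    have hP' : (P.comap E).IsPrime := Ideal.comap_isPrime _ _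
    obtain ⟨τ, hτ, j, hj, hc⟩ := H (P.comap E) hP'
    refine ⟨τ, hτ, e ∘ j, fun f hf => hj f ?_, ?_⟩
    · rw [Ideal.mem_comap]
      simpa [E, MvPolynomial.rename_rename] using hf
    · rw [RingEquiv.height_comap] at hc
      rwa [← Nat.card_congr e]
  | h_empty =>
    intro P hP
    refine ⟨PEmpty, inferInstance, id, fun f hf => ?_, by simp⟩
    by_contra h0
    have := MvPolynomial.eq_C_of_isEmpty f
    refine hP.ne_top (Ideal.eq_top_of_isUnit_mem _ hf ?_)
    rw [this, MvPolynomial.rename_C]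
    rw [this] at h0
    exact (isUnit_iff_ne_zero.mpr (fun h => h0 (by rw [h, map_zero]))).map _
  | @h_option α _ IH =>
    intro P hP
    let E := (MvPolynomial.optionEquivLeft k α).toRingEquiv
    let P1 : Ideal (Polynomial (MvPolynomial α k)) := P.comap E.symm
    have hP1 : P1.IsPrime := Ideal.comap_isPrime _ _
    let p0 := P1.comap (algebraMap (MvPolynomial α k) (Polynomial (MvPolynomial α k)))
    have hp0 : p0.IsPrime := Ideal.comap_isPrime _ _
    have hlies : P1.LiesOver p0 := ⟨rfl⟩
    have hh : P1.height = P.height := RingEquiv.height_comap _ _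
    have hht := Ideal.height_eq_height_add_of_liesOver_of_hasGoingDown p0 P1
    rw [hh] at hht
    have hmem : ∀ f, f ∈ P ↔ E f ∈ P1 := fun f => by
      simp [P1]
    obtain ⟨τ, hτ, j, hj, hc⟩ := IH p0 hp0
    have key1 : ∀ f : MvPolynomial τ k, E (MvPolynomial.rename (some ∘ j) f) =
        Polynomial.C (MvPolynomial.rename j f) := fun f => by
      induction f using MvPolynomial.induction_on with
      | C a => simp [E]
      | add p q hp hq => simp only [map_add, hp, hq]
      | mul_X p n hp => simp only [map_mul, hp]; simp [E]
    have key : ∀ f : MvPolynomial (Option τ) k, E (MvPolynomial.rename (Option.map j) f) =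
        Polynomial.map (MvPolynomial.rename j : MvPolynomial τ k →ₐ[k] MvPolynomial α k).toRingHom
          (MvPolynomial.optionEquivLeft k τ f) := fun f => by
      induction f using MvPolynomial.induction_on with
      | C a => simp [E]
      | add p q hp hq => simp only [map_add, Polynomial.map_add, hp, hq]
      | mul_X p n hp =>
        simp only [map_mul, Polynomial.map_mul, hp]
        cases n <;> simp [E]
    by_cases hcase : P1 ≤ p0.map (algebraMap (MvPolynomial α k) (Polynomial (MvPolynomial α k)))
    · refine ⟨Option τ, inferInstance, Option.map j, fun f hf => ?_, ?_⟩
      · rw [hmem, key] at hf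
        have h2 := hcase hf
        rw [Polynomial.algebraMap_eq, Ideal.mem_map_C_iff] at h2
        have : MvPolynomial.optionEquivLeft k τ f = 0 := by
          ext1 n
          rw [Polynomial.coeff_zero]
          apply hj
          simpa using h2 n
        simpa using this
      · rw [hht]
        have : Nat.card (Option τ) = Nat.card τ + 1 := Finite.card_option
        have h3 : Nat.card (Option α) = Nat.card α + 1 := Finite.card_option
        rw [this, h3]
        push_cast
        calc (Nat.card α : ℕ∞) + 1 ≤ Nat.card τ + p0.height + 1 := by gcongr
          _ ≤ _ := by
            rw [add_right_comm, ← add_assoc]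
            exact le_self_add
    · refine ⟨τ, hτ, some ∘ j, fun f hf => hj f ?_, ?_⟩
      · rw [hmem] at hf
        change Polynomial.C _ ∈ P1
        rwa [key1] at hf
      · have h3 : Nat.card (Option α) = Nat.card α + 1 := Finite.card_option
        rw [hht, h3]
        push_cast
        rw [← add_assoc]
        gcongr
        have : (p0.map (algebraMap (MvPolynomial α k) (Polynomial (MvPolynomial α k)))).IsPrime := by
          rw [Polynomial.algebraMap_eq]
          exact Ideal.isPrime_map_C_of_isPrime
        rw [Order.one_le_iff_ne_zero, Ne, Ideal.height_eq_zero_iff_eq_bot, Ideal.map_eq_bot_iff_le_ker,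
          Ideal.mk_ker]
        exact hcase

theorem aux_finrank_hom (k : Type u) [Field k] (σ : Type) [Finite σ] (d : ℕ) :
    Module.finrank k (MvPolynomial.homogeneousSubmodule σ k d) = (Nat.card σ).multichoose d := by
  classical
  have := Fintype.ofFinite σ
  rw [MvPolynomial.homogeneousSubmodule_eq_finsupp_supported]
  rw [(AddMonoidAlgebra.supportedEquivFinsupp (R := k) (S := k) {m : σ →₀ ℕ | m.degree = d}).finrank_eq]
  rw [← Sym.natCard_sym_eq_multichoose]
  have e : {m : σ →₀ ℕ | m.degree = d} ≃ Sym σ d := by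
    refine Equiv.subtypeEquiv (Finsupp.orderIsoMultiset (ι := σ)).toEquiv fun m => ?_
    change m.degree = d ↔ (Finsupp.toMultiset m).card = d
    rw [Finsupp.card_toMultiset]
    rfl
  have := Finite.of_equiv _ e.symm
  have := Fintype.ofFinite {m : σ →₀ ℕ | m.degree = d}
  rw [← Nat.card_congr e, Module.finrank_finsupp_self, Nat.card_eq_fintype_card]

theorem aux_poly (r : ℕ) (P : Polynomial ℚ) (H : ℕ → ℕ)
    (hP : ∀ᶠ d : ℕ in Filter.atTop, (H d : ℚ) = P.eval (d : ℚ))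
    (hl : ∀ᶠ d : ℕ in Filter.atTop, (r + 1).multichoose d ≤ H d)
    (hu : ∀ᶠ d : ℕ in Filter.atTop, H d ≤ 4 * (r + 1).multichoose d) :
    (P.natDegree.factorial : ℚ) * P.leadingCoeff ≤ 4 := by
  let A : Polynomial ℚ := (ascPochhammer ℚ r).comp (Polynomial.X + Polynomial.C 1)
  have hAm : A.Monic := (monic_ascPochhammer ℚ r).comp_X_add_C 1
  have hAd : A.natDegree = r := by
    rw [Polynomial.natDegree_comp, ascPochhammer_natDegree, Polynomial.natDegree_X_add_C, mul_one]
  have hAe : ∀ d : ℕ, A.eval (d : ℚ) = r.factorial * (r + 1).multichoose d := by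
    intro d
    have h1 : A.eval (d : ℚ) = (d + 1).ascFactorial r := by
      simp only [A, Polynomial.eval_comp, Polynomial.eval_add, Polynomial.eval_X, Polynomial.eval_C]
      rw [Nat.cast_ascFactorial]
      push_cast
      rfl
    rw [h1, Nat.multichoose_eq, Nat.ascFactorial_eq_factorial_mul_choose]
    rw [show r + 1 + d - 1 = d + r by omega, ← Nat.choose_symm_add]
    push_cast
    rfl
  have hpos : ∀ d : ℕ, 0 < A.eval (d : ℚ) := by
    intro d
    rw [hAe, Nat.multichoose_eq]
    have : 0 < (r + 1 + d - 1).choose d := Nat.choose_pos (by omega)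
    positivity
  have hr : (0 : ℚ) < r.factorial := by positivity
  have hl' : ∀ᶠ d : ℕ in Filter.atTop, A.eval (d : ℚ) ≤ r.factorial * P.eval (d : ℚ) := by
    filter_upwards [hP, hl] with d h1 h2
    rw [← h1, hAe]
    gcongr
  have hu' : ∀ᶠ d : ℕ in Filter.atTop, r.factorial * P.eval (d : ℚ) ≤ 4 * A.eval (d : ℚ) := by
    filter_upwards [hP, hu] with d h1 h2
    rw [← h1, hAe]
    have : (H d : ℚ) ≤ 4 * (r + 1).multichoose d := by exact_mod_cast h2
    nlinarith
  have hA0 : A ≠ 0 := hAm.ne_zero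
  have cast := tendsto_natCast_atTop_atTop (R := ℚ)
  rcases lt_trichotomy P.degree A.degree with h | h | h
  · have := (Polynomial.div_tendsto_atTop_zero_of_degree_lt P A h).comp cast
    have h2 : (r.factorial : ℚ)⁻¹ ≤ 0 := by
      refine ge_of_tendsto this ?_
      filter_upwards [hl'] with d h1
      simp only [Function.comp]
      rw [le_div_iff₀ (hpos d), inv_mul_le_iff₀ hr]
      exact h1
    exact absurd (inv_pos.mpr hr) (not_lt.mpr h2)
  · have := (Polynomial.div_tendsto_atTop_leadingCoeff_div_of_degree_eq P A h).comp cast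
    rw [hAm.leadingCoeff, div_one] at this
    have hd : P.natDegree = r := by rw [← hAd]; exact Polynomial.natDegree_eq_of_degree_eq h
    rw [hd, ← le_div_iff₀' hr]
    refine le_of_tendsto this ?_
    filter_upwards [hu'] with d h1
    simp only [Function.comp]
    rw [div_le_div_iff₀ (hpos d) hr]
    linarith
  · have := (Polynomial.div_tendsto_atTop_zero_of_degree_lt A P h).comp cast
    have h2 : (r.factorial : ℚ) / 4 ≤ 0 := by
      refine ge_of_tendsto this ?_
      filter_upwards [hu', hl'] with d h1 h3
      simp only [Function.comp]
      have := hpos d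
      have : 0 < P.eval (d : ℚ) := by
        by_contra hneg
        push Not at hneg
        nlinarith
      rw [div_le_div_iff₀ (by norm_num) this]
      linarith
    have : 0 < (r.factorial : ℚ) / 4 := by positivity
    linarith

theorem aux_projection (k : Type u) [Field k] (n : ℕ) (l : MvPolynomial (Fin (n + 1)) k)
    (hl : l.IsHomogeneous 1) (hl0 : l ≠ 0) :
    ∃ (φ : MvPolynomial (Fin (n + 1)) k →ₐ[k] MvPolynomial (Fin n) k)
      (ι : MvPolynomial (Fin n) k →ₐ[k] MvPolynomial (Fin (n + 1)) k),
      (∀ g, φ (ι g) = g) ∧ φ l = 0 ∧ (∀ f, f - ι (φ f) ∈ Ideal.span {l}) ∧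
      (∀ f d, f.IsHomogeneous d → (φ f).IsHomogeneous d) := by
  have h1 := (MvPolynomial.mem_homogeneousSubmodule 1 l).2 hl
  rw [MvPolynomial.homogeneousSubmodule_one_eq_span_X, Submodule.mem_span_range_iff_exists_fun] at h1
  obtain ⟨c, hc⟩ := h1
  have : ∃ j, c j ≠ 0 := by
    by_contra h
    push Not at h
    apply hl0
    rw [← hc]
    simp [h]
  obtain ⟨j, hj⟩ := this
  let v : MvPolynomial (Fin n) k := -((c j)⁻¹ • ∑ i, c (j.succAbove i) • MvPolynomial.X i)
  have hv : v.IsHomogeneous 1 := by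
    rw [← MvPolynomial.mem_homogeneousSubmodule]
    refine neg_mem (Submodule.smul_mem _ _ (sum_mem fun i _ => Submodule.smul_mem _ _ ?_))
    exact MvPolynomial.isHomogeneous_X _ _
  let φ : MvPolynomial (Fin (n + 1)) k →ₐ[k] MvPolynomial (Fin n) k :=
    MvPolynomial.aeval (j.insertNth v MvPolynomial.X : Fin (n + 1) → MvPolynomial (Fin n) k)
  let ι : MvPolynomial (Fin n) k →ₐ[k] MvPolynomial (Fin (n + 1)) k :=
    MvPolynomial.rename j.succAbove
  have hφj : φ (MvPolynomial.X j) = v := by simp [φ]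
  have hφi : ∀ i, φ (MvPolynomial.X (j.succAbove i)) = MvPolynomial.X i := by simp [φ]
  have hl' : l = c j • MvPolynomial.X j + ∑ i, c (j.succAbove i) • MvPolynomial.X (j.succAbove i) := by
    rw [← hc, Fin.sum_univ_succAbove _ j]
  refine ⟨φ, ι, ?_, ?_, ?_, ?_⟩
  · intro g
    have : φ.comp ι = AlgHom.id k _ := by
      ext i : 1
      simp [ι, hφi]
    exact DFunLike.congr_fun this g
  · rw [hl']
    simp only [map_add, map_sum, map_smul, hφj, hφi, v, smul_neg, smul_smul, mul_inv_cancel₀ hj]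
    simp
  · intro f
    have : (Ideal.Quotient.mkₐ k (Ideal.span {l})).comp (ι.comp φ) =
        Ideal.Quotient.mkₐ k (Ideal.span {l}) := by
      ext i : 1
      induction i using j.succAboveCases with
      | x =>
        simp only [AlgHom.comp_apply, hφj, Ideal.Quotient.mkₐ_eq_mk]
        symm
        rw [Ideal.Quotient.eq, Ideal.mem_span_singleton]
        refine ⟨MvPolynomial.C (c j)⁻¹, ?_⟩
        rw [hl', mul_comm, ← MvPolynomial.smul_eq_C_mul]
        simp [v, ι, smul_smul, inv_mul_cancel₀ hj]
      | p i => simp [hφi, ι]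
    have h2 := DFunLike.congr_fun this f
    simp only [AlgHom.comp_apply, Ideal.Quotient.mkₐ_eq_mk] at h2
    rw [← Ideal.Quotient.eq, h2]
  · intro f d hf
    have := hf.aeval (j.insertNth v MvPolynomial.X : Fin (n + 1) → MvPolynomial (Fin n) k) (n := 1) ?_
    · rwa [one_mul] at this
    · intro i
      induction i using j.succAboveCases with
      | x => simpa using hv
      | p i => simpa using MvPolynomial.isHomogeneous_X _ _

theorem aux_koszul (k : Type u) [Field k] (n : ℕ) (h : ℕ → ℕ)
    (hh : ∀ d, Module.finrank k (MvPolynomial.homogeneousSubmodule (Fin n) k d) = h d)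
    (q1 q2 : MvPolynomial (Fin n) k)
    (h1 : q1.IsHomogeneous 2) (h2 : q2.IsHomogeneous 2) (h10 : q1 ≠ 0) (hrel : IsRelPrime q1 q2)
    {V : Type u} [AddCommGroup V] [Module k V] (ψ : MvPolynomial (Fin n) k →ₗ[k] V)
    (hψ : ∀ a b, ψ (a * q1 + b * q2) = 0) (e : ℕ) :
    Module.finrank k ((MvPolynomial.homogeneousSubmodule (Fin n) k (e + 4)).map ψ) +
      2 * h (e + 2) ≤ h (e + 4) + h e := by
  have hfin : ∀ d, Module.Finite k (MvPolynomial.homogeneousSubmodule (Fin n) k d) := fun d =>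
    Module.Finite.iff_fg.mpr (MvPolynomial.homogeneousSubmodule_fg _ _ d)
  let S := fun d => MvPolynomial.homogeneousSubmodule (Fin n) k d
  have h2neg : (-q2).IsHomogeneous 2 :=
    (MvPolynomial.homogeneousSubmodule (Fin n) k 2).neg_mem h2
  let μ : (S (e + 2) × S (e + 2)) →ₗ[k] S (e + 4) :=
    LinearMap.codRestrict _
      (LinearMap.coprod ((LinearMap.mulRight k q1).comp (S (e + 2)).subtype)
        ((LinearMap.mulRight k q2).comp (S (e + 2)).subtype)) (by
        rintro ⟨⟨a, ha⟩, ⟨b, hb⟩⟩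
        simp only [LinearMap.coprod_apply, LinearMap.comp_apply, Submodule.subtype_apply,
          LinearMap.mulRight_apply]
        exact add_mem (MvPolynomial.IsHomogeneous.mul (m := e + 2) (n := 2) ha h1) (MvPolynomial.IsHomogeneous.mul (m := e + 2) (n := 2) hb h2))
  have hμ : ∀ a b, ((μ (a, b) : S (e + 4)) : MvPolynomial (Fin n) k) = a.1 * q1 + b.1 * q2 :=
    fun a b => rfl
  let ν : S e →ₗ[k] (S (e + 2) × S (e + 2)) :=
    LinearMap.prod
      (LinearMap.codRestrict _ ((LinearMap.mulRight k (-q2)).comp (S e).subtype) (fun c =>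
        MvPolynomial.IsHomogeneous.mul c.2 h2neg))
      (LinearMap.codRestrict _ ((LinearMap.mulRight k q1).comp (S e).subtype) (fun c =>
        MvPolynomial.IsHomogeneous.mul c.2 h1))
  have hker : LinearMap.ker μ ≤ LinearMap.range ν := by
    rintro ⟨⟨a, ha⟩, ⟨b, hb⟩⟩ hab
    have hab' : a * q1 + b * q2 = 0 := by
      have := congrArg Subtype.val (LinearMap.mem_ker.mp hab)
      simpa [hμ] using this
    have hdvd : q1 ∣ b * q2 := ⟨-a, by linear_combination hab'⟩
    obtain ⟨c, hc⟩ := hrel.dvd_of_dvd_mul_right hdvd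
    let c' : S e := DirectSum.decompose (MvPolynomial.homogeneousSubmodule (Fin n) k) c e
    have hbc : b = q1 * c' := by
      have h3 := DirectSum.coe_decompose_mul_of_left_mem_of_le
        (MvPolynomial.homogeneousSubmodule (Fin n) k) (b := c) (n := e + 2) (i := 2) h1 (by omega)
      rw [← hc, DirectSum.decompose_of_mem_same _ hb] at h3
      exact h3
    have hac : a = - (c' : MvPolynomial (Fin n) k) * q2 := by
      apply mul_right_cancel₀ h10
      rw [hbc] at hab'
      linear_combination hab'
    refine ⟨c', ?_⟩
    apply Prod.ext
    · apply Subtype.ext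
      change (c' : MvPolynomial (Fin n) k) * (-q2) = a
      rw [hac]; ring
    · apply Subtype.ext
      change (c' : MvPolynomial (Fin n) k) * q1 = b
      rw [hbc]; ring
  have hk : Module.finrank k (LinearMap.ker μ) ≤ h e := by
    rw [← hh e]
    exact (Submodule.finrank_mono hker).trans (LinearMap.finrank_range_le ν)
  have hr := LinearMap.finrank_range_add_finrank_ker μ
  rw [Module.finrank_prod, hh] at hr
  let ψ' : S (e + 4) →ₗ[k] V := ψ.comp (S (e + 4)).subtype
  have hle : LinearMap.range μ ≤ LinearMap.ker ψ' := by
    rintro _ ⟨⟨a, b⟩, rfl⟩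
    rw [LinearMap.mem_ker]
    exact hψ _ _
  have hr2 := LinearMap.finrank_range_add_finrank_ker ψ'
  rw [hh] at hr2
  have h3 := Submodule.finrank_mono hle
  have h4 : LinearMap.range ψ' = (S (e + 4)).map ψ := by
    rw [LinearMap.range_comp, Submodule.range_subtype]
  rw [h4] at hr2
  change Module.finrank k ((S (e + 4)).map ψ) + _ ≤ _
  omega

theorem aux_choose (k : Type u) [Field k] [Infinite k] {A B : Type u} [CommRing A] [Algebra k A]
    [CommRing B] [IsDomain B] [UniqueFactorizationMonoid B] [Algebra k B] (φ : A →ₐ[k] B) (Q : Set A)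
    (hQ : ∀ g : B, Prime g ∨ g = 0 → ¬ (∀ q ∈ Q, φ q ∈ Ideal.span {g})) :
    ∃ q1 ∈ Submodule.span k Q, ∃ q2 ∈ Submodule.span k Q, φ q1 ≠ 0 ∧ IsRelPrime (φ q1) (φ q2) := by
  classical
  have h0 := hQ 0 (Or.inr rfl)
  push Not at h0
  obtain ⟨q1, hq1, hq1'⟩ := h0
  have hne : φ q1 ≠ 0 := fun h => hq1' (by rw [h]; exact zero_mem _)
  refine ⟨q1, Submodule.subset_span hq1, ?_⟩
  let Vg : B → Submodule k (Submodule.span k Q) := fun g =>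
    (((Ideal.span {g}).restrictScalars k).comap φ.toLinearMap).comap (Submodule.span k Q).subtype
  let s : Finset (Submodule k (Submodule.span k Q)) :=
    (UniqueFactorizationMonoid.factors (φ q1)).toFinset.image Vg
  have hs : ⊤ ∉ s := by
    intro hs
    obtain ⟨g, hg, hgt⟩ := Finset.mem_image.mp hs
    have hgp := UniqueFactorizationMonoid.prime_of_factor g (Multiset.mem_toFinset.mp hg)
    refine hQ g (Or.inl hgp) fun q hq => ?_
    have : (⟨q, Submodule.subset_span hq⟩ : Submodule.span k Q) ∈ Vg g := by rw [hgt]; trivial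
    exact this
  have := Subspace.biUnion_ne_univ_of_top_notMem hs
  rw [Set.ne_univ_iff_exists_notMem] at this
  obtain ⟨q2, hq2⟩ := this
  refine ⟨q2.1, q2.2, hne, ?_⟩
  rw [UniqueFactorizationMonoid.isRelPrime_iff_no_prime_factors hne]
  intro g h1 h2 hg
  obtain ⟨g', hg', ha⟩ := UniqueFactorizationMonoid.exists_mem_factors_of_dvd hne hg.irreducible h1
  apply hq2
  simp only [Set.mem_iUnion]
  refine ⟨Vg g', Finset.mem_image_of_mem _ (Multiset.mem_toFinset.mpr hg'), ?_⟩
  change φ q2.1 ∈ Ideal.span {g'}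
  rw [Ideal.mem_span_singleton]
  exact ha.symm.dvd.trans h2

theorem aux_multichoose (m : ℕ) (e : ℕ) (H : ℕ)
    (h : H + 2 * (m + 3).multichoose (e + 2) ≤ (m + 3).multichoose (e + 4) + (m + 3).multichoose e) :
    H ≤ 4 * (m + 1).multichoose (e + 4) := by
  have f1 := Nat.multichoose_succ_succ (m + 2) (e + 3)
  have f2 := Nat.multichoose_succ_succ (m + 2) (e + 2)
  have f3 := Nat.multichoose_succ_succ (m + 2) (e + 1)
  have f4 := Nat.multichoose_succ_succ (m + 2) e
  have g1 := Nat.multichoose_succ_succ (m + 1) (e + 3)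
  have g2 := Nat.multichoose_succ_succ (m + 1) (e + 2)
  have g3 := Nat.multichoose_succ_succ (m + 1) (e + 1)
  have k1 := Nat.multichoose_succ_succ m (e + 3)
  have k2 := Nat.multichoose_succ_succ m (e + 2)
  have k3 := Nat.multichoose_succ_succ m (e + 1)
  norm_num [add_assoc] at f1 f2 f3 f4 g1 g2 g3 k1 k2 k3 h ⊢
  omega

theorem aux_multichoose_mono {a b : ℕ} (hab : a ≤ b) (d : ℕ) :
    a.multichoose d ≤ b.multichoose d := by
  rw [Nat.multichoose_eq, Nat.multichoose_eq]
  exact Nat.choose_le_choose d (by omega)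

/-- Let `p` be a graded prime ideal of height `3` with `e(S/p) = 5` over
an algebraically closed field. If `p` contains a homogeneous ideal of height `3` generated
by quadrics, then `p` is nondegenerate: it contains no nonzero linear form. -/
theorem nondegenerate_of_height_three_mult_five (k : Type u) [Field k] [IsAlgClosed k]
    (N : ℕ) (p : Ideal (MvPolynomial (Fin N) k)) (hp : p.IsPrime)
    (hhom : p.IsHomogeneous (MvPolynomial.homogeneousSubmodule (Fin N) k))
    (hht : p.heightENat = 3)
    (hmult : hilbertSamuelMultiplicity k p = 5)
    (hcontains : ∃ Q : Set (MvPolynomial (Fin N) k),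
      (∀ q ∈ Q, MvPolynomial.IsHomogeneous q 2) ∧ Ideal.span Q ≤ p ∧
        (Ideal.span Q).heightENat = 3) :
    ∀ l : MvPolynomial (Fin N) k, l.IsHomogeneous 1 → l ∈ p → l = 0 := by
  intro l hl hlp
  by_contra hl0
  obtain ⟨Q, hQ2, hQp, hQh⟩ := hcontains
  -- heights
  have hht' : p.height = 3 := by
    rw [← hht]
    apply le_antisymm
    · refine le_iInf₂ fun q hq => ?_
      rw [← PrimeSpectrum.height_eq_orderHeight]
      exact Ideal.height_mono hq
    · refine (iInf₂_le (⟨p, hp⟩ : PrimeSpectrum _) le_rfl).trans ?_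
      rw [← PrimeSpectrum.height_eq_orderHeight]
  have hQh' : ∀ P : Ideal (MvPolynomial (Fin N) k), P.IsPrime → Ideal.span Q ≤ P →
      3 ≤ P.height := by
    intro P hP hle
    rw [← hQh]
    refine (iInf₂_le (⟨P, hP⟩ : PrimeSpectrum _) hle).trans ?_
    rw [← PrimeSpectrum.height_eq_orderHeight]
  obtain ⟨τ, hτ, j, hj, hcard⟩ := aux_indep_variables k (Fin N) p hp
  rw [hht', Nat.card_fin] at hcard
  have hcard' : N ≤ Nat.card τ + 3 := by exact_mod_cast hcard
  have hN : 3 ≤ N := by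
    have h1 : (p.height : WithBot ℕ∞) ≤ ringKrullDim (MvPolynomial (Fin N) k) :=
      Ideal.height_le_ringKrullDim_of_isPrime
    rw [hht', MvPolynomial.ringKrullDim_of_isNoetherianRing, ringKrullDim_eq_zero_of_field,
      zero_add, Nat.card_fin] at h1
    exact_mod_cast h1
  obtain ⟨m, rfl⟩ : ∃ m, N = m + 2 + 1 := ⟨N - 3, by omega⟩
  obtain ⟨φ, ι, hφι, hφl, hιφ, hφhom⟩ := aux_projection k (m + 2) l hl hl0
  have : Infinite k := IsAlgClosed.instInfinite
  obtain ⟨q1, hq1, q2, hq2, hne, hrel⟩ := aux_choose k φ Q (by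
    intro g hg hcon
    let P := (Ideal.span {g}).comap φ
    have hgP : (Ideal.span {g}).IsPrime := by
      rcases hg with hg | rfl
      · exact (Ideal.span_singleton_prime hg.ne_zero).2 hg
      · simpa using Ideal.isPrime_bot
    have hP : P.IsPrime := Ideal.comap_isPrime _ _
    have hPspan : P = Ideal.span {l, ι g} := by
      apply le_antisymm
      · intro f hf
        obtain ⟨c, hc⟩ := Ideal.mem_span_singleton.mp (Ideal.mem_comap.mp hf)
        have h1 := hιφ f
        have h2 : f = (f - ι (φ f)) + ι c * ι g := by
          have : φ f = g * c := hc
          rw [this, map_mul]; ring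
        rw [h2]
        refine add_mem (Ideal.span_mono (by simp) h1) (Ideal.mul_mem_left _ _ (Ideal.subset_span ?_))
        simp
      · rw [Ideal.span_le]
        rintro f (rfl | rfl)
        · change φ f ∈ Ideal.span {g}
          rw [hφl]; exact zero_mem _
        · change φ (ι g) ∈ Ideal.span {g}
          rw [hφι]; exact Ideal.mem_span_singleton_self g
    have h3 := hQh' P hP (Ideal.span_le.mpr hcon)
    have h4 : P.height ≤ ({l, ι g} : Set (MvPolynomial (Fin (m + 2 + 1)) k)).ncard := by
      apply Ideal.height_le_card_of_mem_minimalPrimes_span (Set.toFinite _)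
      rw [← hPspan, Ideal.minimalPrimes_eq_subsingleton_self]
      rfl
    have h5 : ({l, ι g} : Set (MvPolynomial (Fin (m + 2 + 1)) k)).ncard ≤ 2 := by
      exact (Set.ncard_insert_le _ _).trans (by rw [Set.ncard_singleton])
    have h6 : (3 : ℕ∞) ≤ (2 : ℕ) := h3.trans (h4.trans (by exact_mod_cast h5))
    exact absurd h6 (by decide))
  have hhom2 : ∀ q ∈ Submodule.span k Q, q.IsHomogeneous 2 := by
    intro q hq
    have : Submodule.span k Q ≤ MvPolynomial.homogeneousSubmodule (Fin (m + 2 + 1)) k 2 :=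
      Submodule.span_le.mpr hQ2
    exact this hq
  have hinp : ∀ q ∈ Submodule.span k Q, ι (φ q) ∈ p := by
    intro q hq
    have h1 : Submodule.span k Q ≤ p.restrictScalars k :=
      Submodule.span_le.mpr fun x hx => hQp (Ideal.subset_span hx)
    have h2 : q ∈ p := h1 hq
    have h3 : Ideal.span {l} ≤ p := (Ideal.span_singleton_le_iff_mem p).2 hlp
    have h4 := p.sub_mem h2 (h3 (hιφ q))
    simpa using h4
  let ψ : MvPolynomial (Fin (m + 2)) k →ₗ[k] (MvPolynomial (Fin (m + 2 + 1)) k ⧸ p) :=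
    ((Ideal.Quotient.mkₐ k p).comp ι).toLinearMap
  have hψ : ∀ a b, ψ (a * φ q1 + b * φ q2) = 0 := by
    intro a b
    change Ideal.Quotient.mk p (ι _) = 0
    rw [Ideal.Quotient.eq_zero_iff_mem, map_add, map_mul, map_mul]
    exact add_mem (p.mul_mem_left _ (hinp _ hq1)) (p.mul_mem_left _ (hinp _ hq2))
  have hfin : ∀ (n d : ℕ), Module.Finite k (MvPolynomial.homogeneousSubmodule (Fin n) k d) :=
    fun n d => Module.Finite.iff_fg.mpr (MvPolynomial.homogeneousSubmodule_fg _ _ d)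
  have hupper : ∀ e, hilbertFunction k p (e + 4) + 2 * (m + 2).multichoose (e + 2) ≤
      (m + 2).multichoose (e + 4) + (m + 2).multichoose e := by
    intro e
    have h1 := aux_koszul k (m + 2) (fun d => (m + 2).multichoose d)
      (fun d => by rw [aux_finrank_hom, Nat.card_fin]) (φ q1) (φ q2) (hφhom _ _ (hhom2 _ hq1))
      (hφhom _ _ (hhom2 _ hq2)) hne hrel ψ hψ e
    refine le_trans (Nat.add_le_add_right ?_ _) h1
    apply Submodule.finrank_mono
    rintro _ ⟨f, hf, rfl⟩
    refine ⟨φ f, hφhom _ _ hf, ?_⟩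
    change Ideal.Quotient.mk p (ι (φ f)) = Ideal.Quotient.mk p f
    symm
    rw [Ideal.Quotient.eq]
    exact (Ideal.span_singleton_le_iff_mem p).2 hlp (hιφ f)
  have hlower : ∀ d, m.multichoose d ≤ hilbertFunction k p d := by
    intro d
    refine (aux_multichoose_mono (show m ≤ Nat.card τ by omega) d).trans ?_
    rw [← aux_finrank_hom k τ d]
    let χ : MvPolynomial.homogeneousSubmodule τ k d →ₗ[k]
        Submodule.map (Ideal.Quotient.mkₐ k p).toLinearMap
          (MvPolynomial.homogeneousSubmodule (Fin (m + 2 + 1)) k d) :=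
      LinearMap.codRestrict _ (((Ideal.Quotient.mkₐ k p).comp (MvPolynomial.rename j)).toLinearMap.comp
        (MvPolynomial.homogeneousSubmodule τ k d).subtype) (fun f =>
          ⟨MvPolynomial.rename j f.1, MvPolynomial.IsHomogeneous.rename_isHomogeneous f.2, rfl⟩)
    apply LinearMap.finrank_le_finrank_of_injective (f := χ)
    rw [← LinearMap.ker_eq_bot, LinearMap.ker_eq_bot']
    intro f hf
    have h1 : Ideal.Quotient.mk p (MvPolynomial.rename j f.1) = 0 := congrArg Subtype.val hf
    exact Subtype.ext (hj _ (Ideal.Quotient.eq_zero_iff_mem.mp h1))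
  -- the multiplicity
  rw [hilbertSamuelMultiplicity] at hmult
  split_ifs at hmult with hex
  · have hspec := hex.choose_spec
    set P := hex.choose
    rcases m with _ | r
    · have hz : ∀ᶠ d : ℕ in Filter.atTop, P.eval (d : ℚ) = 0 := by
        filter_upwards [hspec, Filter.eventually_ge_atTop 4] with d h1 h2
        obtain ⟨e, rfl⟩ : ∃ e, d = e + 4 := ⟨d - 4, by omega⟩
        have h3 := hupper e
        simp only [Nat.zero_add, Nat.multichoose_two] at h3
        rw [← h1]
        have : hilbertFunction k p (e + 4) = 0 := by omega
        exact_mod_cast this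
      have hP0 : P = 0 := by
        apply Polynomial.eq_zero_of_infinite_isRoot
        obtain ⟨D, hD⟩ := Filter.eventually_atTop.mp hz
        refine Set.Infinite.mono (s := (fun n : ℕ => (n : ℚ)) '' Set.Ici D) ?_ ?_
        · rintro _ ⟨n, hn, rfl⟩
          exact hD n hn
        · exact (Set.Ici_infinite D).image (Nat.cast_injective.injOn)
      rw [hP0] at hmult
      norm_num at hmult
    · have := aux_poly r P (hilbertFunction k p) hspec (Filter.Eventually.of_forall hlower) (by
        filter_upwards [Filter.eventually_ge_atTop 4] with d h2
        obtain ⟨e, rfl⟩ : ∃ e, d = e + 4 := ⟨d - 4, by omega⟩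
        exact aux_multichoose r e _ (hupper e))
      rw [hmult] at this
      norm_num at this
  · norm_num at hmult
end

section
/- Let S be a polynomial ring over a field k, let x, y be linearly independent linear forms, let q_1, …, q_s be quadrics contained in (x,y), written q_i = a_i x + b_i y with a_i, b_i linear forms, and let z_1, …, z_u (with u ≥ 1) be linear forms such that (z_1,…,z_u) has height at least 1. Set H = (q_1, …, q_s) + (z_1, …, z_u) and m = (x, y, a_1, …, a_s, b_1, …, b_s, z_1, …, z_u). Then every associated prime p of S/H with p ≠ m satisfies pd(S_p/H_p) ≤ s + u (equivalently, height(p) ≤ s + u). -/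
open CategoryTheory Opposite

universe u

namespace QL

/-- `p` is the colon ideal `(I : f)` for some `f`. -/
def IsCol {R : Type*} [CommRing R] (p I : Ideal R) : Prop := ∃ f, ∀ r, r ∈ p ↔ r * f ∈ I

lemma IsCol.le {R : Type*} [CommRing R] {p I : Ideal R} (h : IsCol p I) : I ≤ p := by
  obtain ⟨f, hf⟩ := h
  intro r hr
  exact (hf r).2 (I.mul_mem_right _ hr)

lemma IsCol.bot {R : Type*} [CommRing R] [IsDomain R] {p I : Ideal R} [p.IsPrime]
    (h : IsCol p I) (hI : I = ⊥) : p.height = 0 := by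
  obtain ⟨f, hf⟩ := h
  subst hI
  have : p = ⊥ := by
    rw [eq_bot_iff]
    intro r hr
    have h1 := (hf r).1 hr
    have h2 : f ≠ 0 := by
      rintro rfl
      exact Ideal.IsPrime.ne_top ‹p.IsPrime› ((Ideal.eq_top_iff_one p).2 ((hf 1).2 (by simp)))
    simpa [h2] using h1
  subst this
  exact Ideal.height_bot

lemma IsCol.map_surj {R R' : Type*} [CommRing R] [CommRing R'] (φ : R →+* R')
    (hφ : Function.Surjective φ) {p I : Ideal R} (hk : RingHom.ker φ ≤ I) (h : IsCol p I) :
    IsCol (p.map φ) (I.map φ) := by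
  have hp := h.le
  obtain ⟨f, hf⟩ := h
  have key : ∀ (J : Ideal R), RingHom.ker φ ≤ J → ∀ r, φ r ∈ J.map φ ↔ r ∈ J := by
    intro J hJ r
    rw [← Ideal.mem_comap, Ideal.comap_map_of_surjective φ hφ, ← RingHom.ker_eq_comap_bot,
      sup_eq_left.2 hJ]
  refine ⟨φ f, fun r' => ?_⟩
  obtain ⟨r, rfl⟩ := hφ r'
  rw [← map_mul, key p (hk.trans hp), key I hk, hf]

lemma height_surj {R R' : Type*} [CommRing R] [IsNoetherianRing R] [CommRing R'] (φ : R →+* R')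
    (hφ : Function.Surjective φ) {p : Ideal R} [p.IsPrime] (hk : RingHom.ker φ ≤ p)
    (n : ℕ) (hn : (RingHom.ker φ).spanFinrank ≤ n) :
    (p.map φ).IsPrime ∧ p.height ≤ (p.map φ).height + n := by
  refine ⟨Ideal.map_isPrime_of_surjective hφ hk, ?_⟩
  have h1 := Ideal.height_le_height_add_spanFinrank_of_le hk
  let e := RingHom.quotientKerEquivOfSurjective hφ
  have h2 : p.map φ = (p.map (Ideal.Quotient.mk (RingHom.ker φ))).map e := by
    have h3 : φ = (e : R ⧸ RingHom.ker φ →+* R').comp (Ideal.Quotient.mk (RingHom.ker φ)) := by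
      ext r
      rfl
    conv_lhs => rw [h3]
    exact (Ideal.map_map _ _).symm
  rw [h2, RingEquiv.height_map]
  refine h1.trans ?_
  gcongr

lemma IsCol.map_loc {R R' : Type*} [CommRing R] [CommRing R'] [Algebra R R'] (M : Submonoid R)
    [IsLocalization M R'] {p I : Ideal R} (h : IsCol p I) :
    IsCol (p.map (algebraMap R R')) (I.map (algebraMap R R')) := by
  obtain ⟨f, hf⟩ := h
  refine ⟨algebraMap R R' f, fun r' => ?_⟩
  obtain ⟨r, s, rfl⟩ := IsLocalization.exists_mk'_eq M r'
  rw [IsLocalization.mk'_mem_map_algebraMap_iff]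
  have : IsLocalization.mk' R' r s * algebraMap R R' f = IsLocalization.mk' R' (r * f) s := by
    rw [IsLocalization.eq_mk'_iff_mul_eq, mul_right_comm, IsLocalization.mk'_spec, map_mul]
  rw [this, IsLocalization.mk'_mem_map_algebraMap_iff]
  constructor
  · rintro ⟨t, ht, h⟩
    refine ⟨t, ht, ?_⟩
    rw [← mul_assoc]
    exact (hf _).1 h
  · rintro ⟨t, ht, h⟩
    refine ⟨t, ht, (hf _).2 (by rwa [mul_assoc])⟩

/-- dividing by an element in a UFD. -/
lemma IsCol.div {R : Type*} [CommRing R] [IsDomain R] [UniqueFactorizationMonoid R]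
    [IsNoetherianRing R] {p I : Ideal R} [hp : p.IsPrime] {d : R} (hd : d ≠ 0)
    (h : IsCol p (Ideal.span {d} * I)) : p.height ≤ 1 ∨ IsCol p I := by
  obtain ⟨f, hf⟩ := h
  by_cases hc : ∃ r, r * f ∉ Ideal.span {d} * I ∧ d ∣ r * f
  · right
    obtain ⟨r, hr, g, hg⟩ := hc
    refine ⟨g, fun t => ?_⟩
    have hrp : r ∉ p := fun h => hr ((hf r).1 h)
    have : t ∈ p ↔ t * r ∈ p := ⟨fun h => p.mul_mem_right _ h, fun h =>
      (hp.mem_or_mem h).resolve_right hrp⟩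
    rw [this, hf, mul_assoc, hg, mul_left_comm, Ideal.mem_span_singleton_mul]
    constructor
    · rintro ⟨z, hz, h⟩
      rwa [← mul_left_cancel₀ hd h]
    · intro h
      exact ⟨_, h, rfl⟩
  · left
    push Not at hc
    obtain ⟨d', f', c, hrel, h1, h2⟩ := UniqueFactorizationMonoid.exists_reduced_factors d hd f
    have hc0 : c ≠ 0 := by rintro rfl; simp at h1; exact hd h1.symm
    have hpd : p = Ideal.span {d'} := by
      ext r
      rw [Ideal.mem_span_singleton]
      constructor
      · intro hr
        have := (hf r).1 hr
        have h3 : d ∣ r * f := by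
          rw [Ideal.mem_span_singleton_mul] at this
          obtain ⟨w, _, hw⟩ := this
          exact ⟨w, hw.symm⟩
        rw [← h1, ← h2, mul_left_comm] at h3
        exact hrel.dvd_of_dvd_mul_right ((mul_dvd_mul_iff_left hc0).1 h3)
      · rintro ⟨e, rfl⟩
        rw [hf]
        by_contra hcon
        refine hc _ hcon ?_
        rw [← h1, ← h2]
        exact ⟨e * f', by ring⟩
    have : p.IsPrincipal := ⟨d', hpd⟩
    exact Ideal.height_le_one_of_isPrincipal_of_mem_minimalPrimes p p
      (by rw [Ideal.minimalPrimes_eq_subsingleton_self]; rfl)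

end QL

namespace QL
open MvPolynomial

/-- Affine-linear polynomials. -/
noncomputable def Aff (τ V : Type*) [CommRing V] : Submodule V (MvPolynomial τ V) :=
  Submodule.span V (insert 1 (Set.range X))

section aff
variable {τ V : Type*} [CommRing V]

lemma X_mem_aff (i : τ) : (X i : MvPolynomial τ V) ∈ Aff τ V :=
  Submodule.subset_span (Or.inr ⟨i, rfl⟩)

lemma C_mem_aff (c : V) : (C c : MvPolynomial τ V) ∈ Aff τ V := by
  have : (C c : MvPolynomial τ V) = c • 1 := by simp [smul_eq_C_mul]
  rw [this]
  exact Submodule.smul_mem _ _ (Submodule.subset_span (Or.inl rfl))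

lemma C_mul_mem_aff (c : V) {g : MvPolynomial τ V} (hg : g ∈ Aff τ V) : C c * g ∈ Aff τ V := by
  rw [← smul_eq_C_mul]
  exact Submodule.smul_mem _ _ hg

lemma aff_hom {τ' V' : Type*} [CommRing V'] (φ : MvPolynomial τ V →+* MvPolynomial τ' V')
    (hC : ∀ c, ∃ c', φ (C c) = C c') (hX : ∀ i, φ (X i) ∈ Aff τ' V')
    {g : MvPolynomial τ V} (hg : g ∈ Aff τ V) : φ g ∈ Aff τ' V' := by
  induction hg using Submodule.span_induction with
  | mem x h =>
    rcases h with rfl | ⟨i, rfl⟩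
    · rw [map_one, ← C_1]; exact C_mem_aff _
    · exact hX i
  | zero => simp
  | add x y _ _ hx hy => rw [map_add]; exact Submodule.add_mem _ hx hy
  | smul a x _ hx =>
    rw [smul_eq_C_mul, map_mul]
    obtain ⟨c', hc'⟩ := hC a
    rw [hc']
    exact C_mul_mem_aff _ hx

lemma aff_repr [Fintype τ] {g : MvPolynomial τ V} (hg : g ∈ Aff τ V) :
    g = C (coeff 0 g) + ∑ i, C (coeff (Finsupp.single i 1) g) * X i := by
  classical
  induction hg using Submodule.span_induction with
  | mem x h =>
    rcases h with rfl | ⟨i, rfl⟩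
    · have : ∀ i : τ, coeff (Finsupp.single i 1) (1 : MvPolynomial τ V) = 0 := by
        intro i
        rw [coeff_one, if_neg]
        intro h
        have := congrArg (fun f => f i) h
        simp at this
      simp [this]
    · have : ∀ j : τ, coeff (Finsupp.single j 1) (X i : MvPolynomial τ V)
          = if i = j then 1 else 0 := by
        intro j
        rw [coeff_X]
        simp [Finsupp.single_left_inj]
      simp [this]
  | zero => simp
  | add x y _ _ hx hy =>
    conv_lhs => rw [hx, hy]
    simp only [coeff_add, map_add, add_mul, Finset.sum_add_distrib]
    ring
  | smul a x _ hx =>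
    conv_lhs => rw [hx]
    simp only [smul_eq_C_mul, coeff_C_mul, C_mul, mul_add, Finset.mul_sum, mul_assoc]

lemma aff_of_repr [Fintype τ] (c : V) (a : τ → V) :
    C c + ∑ i, C (a i) * X i ∈ Aff τ V :=
  Submodule.add_mem _ (C_mem_aff _)
    (Submodule.sum_mem _ fun i _ => C_mul_mem_aff _ (X_mem_aff i))

lemma aff_dvd [Finite τ] {g : MvPolynomial τ V} (hg : g ∈ Aff τ V) (d : V)
    (h0 : d ∣ coeff 0 g) (h1 : ∀ i, d ∣ coeff (Finsupp.single i 1) g) :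
    ∃ g' ∈ Aff τ V, g = C d * g' := by
  cases nonempty_fintype τ
  obtain ⟨c, hc⟩ := h0
  choose a ha using h1
  refine ⟨_, aff_of_repr c a, ?_⟩
  rw [aff_repr hg, hc]
  simp only [ha, map_mul, mul_add, Finset.mul_sum, mul_assoc]

/-- elimination of a variable. -/
lemma elim [Finite τ] {g : MvPolynomial τ V} (hg : g ∈ Aff τ V) (j : τ)
    (hu : IsUnit (coeff (Finsupp.single j 1) g)) :
    ∃ φ : MvPolynomial τ V →ₐ[V] MvPolynomial {i // i ≠ j} V, Function.Surjective φ ∧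
      RingHom.ker φ.toRingHom = Ideal.span {g} ∧ ∀ f ∈ Aff τ V, φ f ∈ Aff _ V := by
  classical
  cases nonempty_fintype τ
  obtain ⟨w, hw⟩ := hu.exists_left_inv
  set c := coeff 0 g with hc
  set a : τ → V := fun i => coeff (Finsupp.single i 1) g with ha
  change w * a j = 1 at hw
  have hgr : g = C c + ∑ i, C (a i) * X i := aff_repr hg
  let E : MvPolynomial {i // i ≠ j} V := C c + ∑ i : {i // i ≠ j}, C (a i) * X i
  have hE : E ∈ Aff _ V := aff_of_repr c (fun i : {i // i ≠ j} => a i)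
  let φ : MvPolynomial τ V →ₐ[V] MvPolynomial {i // i ≠ j} V :=
    aeval (fun i => if h : i = j then - (C w * E) else X ⟨i, h⟩)
  let ψ : MvPolynomial {i // i ≠ j} V →ₐ[V] MvPolynomial τ V := rename Subtype.val
  have hφj : φ (X j) = - (C w * E) := by simp [φ]
  have hφi : ∀ i (h : i ≠ j), φ (X i) = X ⟨i, h⟩ := by intro i h; simp [φ, h]
  have hφψ : ∀ r, φ (ψ r) = r := by
    intro r
    have : φ.comp ψ = AlgHom.id _ _ := by
      ext i : 1
      simp only [AlgHom.comp_apply, ψ, rename_X, AlgHom.id_apply]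
      exact hφi _ i.2
    exact DFunLike.congr_fun this r
  have hsum : ∀ F : τ → MvPolynomial τ V, ∑ i, F i = F j + ∑ i : {i // i ≠ j}, F i := by
    intro F
    rw [← Finset.add_sum_erase _ _ (Finset.mem_univ j)]
    congr 1
    refine (Finset.sum_subtype (Finset.univ.erase j) (by simp) F)
  have hψE : C (a j) * X j + ψ E = g := by
    rw [hgr, hsum]
    simp only [E, ψ, map_add, map_sum, map_mul, rename_X, algHom_C, algebraMap_eq]
    ring
  have hwj : (C w : MvPolynomial τ V) * C (a j) = 1 := by rw [← C_mul, hw, C_1]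
  have hwj' : (C w : MvPolynomial {i // i ≠ j} V) * C (a j) = 1 := by rw [← C_mul, hw, C_1]
  have hφg : φ g = 0 := by
    rw [← hψE, map_add, hφψ, map_mul, hφj, algHom_C, algebraMap_eq]
    linear_combination (-E) * hwj'
  refine ⟨φ, fun r => ⟨ψ r, hφψ r⟩, ?_, ?_⟩
  · apply le_antisymm
    · intro r hr
      have key : ∀ r, r - ψ (φ r) ∈ Ideal.span {g} := by
        intro r
        have : (Ideal.Quotient.mkₐ V (Ideal.span {g})) =
            (Ideal.Quotient.mkₐ V (Ideal.span {g})).comp (ψ.comp φ) := by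
          ext i : 1
          simp only [AlgHom.comp_apply]
          by_cases h : i = j
          · subst h
            refine (Ideal.Quotient.eq).2 ?_
            rw [hφj, Ideal.mem_span_singleton]
            refine ⟨C w, ?_⟩
            rw [← hψE, map_neg, map_mul, algHom_C, algebraMap_eq]
            linear_combination (-X i) * hwj
          · rw [hφi i h]; simp [ψ]
        exact (Ideal.Quotient.eq).1 (DFunLike.congr_fun this r)
      have h0 : φ r = 0 := hr
      simpa [h0] using key r
    · rw [Ideal.span_singleton_le_iff_mem]
      exact hφg
  · intro f hf
    refine aff_hom φ.toRingHom (fun c => ⟨c, φ.commutes c⟩) (fun i => ?_) hf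
    by_cases h : i = j
    · subst h
      change φ _ ∈ _
      rw [hφj]
      exact Submodule.neg_mem _ (C_mul_mem_aff _ hE)
    · change φ _ ∈ _
      rw [hφi i h]
      exact X_mem_aff _

end aff
end QL

namespace QL
open MvPolynomial

/-- degree `≤ 1` coefficients. -/
noncomputable def cf {τ V : Type*} [CommRing V] (g : MvPolynomial τ V) : Option τ → V
  | none => coeff 0 g
  | some i => coeff (Finsupp.single i 1) g

lemma exists_min_dvd {V : Type*} [CommRing V] [IsDomain V] [ValuationRing V] (T : Finset V)
    (hT : T.Nonempty) : ∃ d ∈ T, ∀ e ∈ T, d ∣ e := by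
  classical
  induction hT using Finset.Nonempty.cons_induction with
  | singleton a => exact ⟨a, by simp, by simp⟩
  | cons a T h hT ih =>
    obtain ⟨d, hd, hmin⟩ := ih
    rcases ValuationRing.dvd_total a d with h1 | h1
    · refine ⟨a, by simp, fun e he => ?_⟩
      rcases Finset.mem_cons.1 he with rfl | he
      · rfl
      · exact h1.trans (hmin e he)
    · refine ⟨d, by simp [hd], fun e he => ?_⟩
      rcases Finset.mem_cons.1 he with rfl | he
      · exact h1
      · exact hmin e he

lemma elim_height {τ V : Type*} [CommRing V] [IsNoetherianRing V] [Finite τ]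
    {p I : Ideal (MvPolynomial τ V)} [p.IsPrime] (hcol : IsCol p I)
    {g : MvPolynomial τ V} (hg : g ∈ Aff τ V) (hgI : g ∈ I) (j : τ)
    (hu : IsUnit (coeff (Finsupp.single j 1) g)) :
    ∃ φ : MvPolynomial τ V →ₐ[V] MvPolynomial {i // i ≠ j} V,
      (∀ f ∈ Aff τ V, φ f ∈ Aff _ V) ∧ φ g = 0 ∧ (p.map φ.toRingHom).IsPrime ∧
      IsCol (p.map φ.toRingHom) (I.map φ.toRingHom) ∧
      p.height ≤ (p.map φ.toRingHom).height + 1 := by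
  obtain ⟨φ, hs, hk, ha⟩ := elim hg j hu
  have hkI : RingHom.ker φ.toRingHom ≤ I := by
    rw [hk, Ideal.span_singleton_le_iff_mem]; exact hgI
  obtain ⟨h1, h2⟩ := height_surj φ.toRingHom hs (hkI.trans hcol.le) 1 (by
    rw [hk]
    refine (Submodule.spanFinrank_span_le_ncard_of_finite (Set.finite_singleton g)).trans ?_
    simp)
  refine ⟨φ, ha, ?_, h1, hcol.map_surj _ hs hkI, by exact_mod_cast h2⟩
  have : g ∈ RingHom.ker φ.toRingHom := by rw [hk]; exact Ideal.mem_span_singleton_self g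
  exact this

theorem key_local {V : Type*} [CommRing V] [IsDomain V] [IsPrincipalIdealRing V] [IsLocalRing V]
    (s : ℕ) : ∀ (τ : Type) [Finite τ] (G : Finset (MvPolynomial τ V)), G.card ≤ s →
      (∀ g ∈ G, g ∈ Aff τ V) → ∀ (p : Ideal (MvPolynomial τ V)) [p.IsPrime],
      (∀ c ∈ IsLocalRing.maximalIdeal V, C c ∈ p) →
      IsCol p (Ideal.span (G : Set (MvPolynomial τ V))) → p.height ≤ s := by
  classical
  have hval : ValuationRing V := ValuationRing.iff_local_bezout_domain.2 ⟨inferInstance, inferInstance⟩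
  induction s with
  | zero =>
    intro τ _ G hG ha p _ hm hc
    have : G = ∅ := by simpa using hG
    subst this
    rw [hc.bot (by simp)]
    simp
  | succ s ih =>
    have inner : ∀ (τ : Type) [Finite τ] (G : Finset (MvPolynomial τ V)), G.card ≤ s + 1 →
      (∀ g ∈ G, g ∈ Aff τ V) → ∀ (p : Ideal (MvPolynomial τ V)) [p.IsPrime],
      (∀ c ∈ IsLocalRing.maximalIdeal V, C c ∈ p) →
      IsCol p (Ideal.span (G : Set (MvPolynomial τ V))) →
      (∃ g ∈ G, ∃ o, IsUnit (cf g o)) → p.height ≤ (s + 1 : ℕ) := by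
      intro τ _ G hG ha p hp hm hc ⟨g, hgG, o, ho⟩
      have hgI : g ∈ Ideal.span (G : Set (MvPolynomial τ V)) := Ideal.subset_span hgG
      have : ∃ j, IsUnit (coeff (Finsupp.single j 1) g) := by
        by_contra hcon
        push Not at hcon
        cases o with
        | some i => exact hcon i ho
        | none =>
          cases nonempty_fintype τ
          have h1 := hc.le hgI
          rw [aff_repr (ha g hgG)] at h1
          have h2 : ∑ i, C (coeff (Finsupp.single i 1) g) * X i ∈ p :=
            Ideal.sum_mem _ fun i _ => p.mul_mem_right _ (hm _ (hcon i))
          have h3 := (Ideal.add_mem_iff_left _ h2).1 h1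
          exact hp.ne_top (Ideal.eq_top_of_isUnit_mem _ h3 (IsUnit.map C ho))
      obtain ⟨j, hj⟩ := this
      obtain ⟨φ, hφa, hφg, hpr, hcol, hh⟩ := elim_height hc (ha g hgG) hgI j hj
      have hcard : ((G.erase g).image φ).card ≤ s := by
        refine Finset.card_image_le.trans ?_
        rw [Finset.card_erase_of_mem hgG]
        omega
      have hspan : Ideal.map φ.toRingHom (Ideal.span (G : Set (MvPolynomial τ V)))
          = Ideal.span (((G.erase g).image φ : Finset _) : Set (MvPolynomial {i // i ≠ j} V)) := by
        rw [Ideal.map_span]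
        apply le_antisymm
        · rw [Ideal.span_le]
          rintro _ ⟨f, hf, rfl⟩
          by_cases hfg : f = g
          · subst hfg
            change φ f ∈ _
            rw [hφg]; exact Submodule.zero_mem _
          · refine Ideal.subset_span ?_
            simp only [Finset.coe_image]
            exact ⟨f, by simpa [hfg] using hf, rfl⟩
        · apply Ideal.span_mono
          simp only [Finset.coe_image]
          rintro _ ⟨f, hf, rfl⟩
          exact ⟨f, by simp at hf; exact hf.1, rfl⟩
      rw [hspan] at hcol
      have := ih _ _ hcard (by
        intro f hf
        obtain ⟨f', hf', rfl⟩ := Finset.mem_image.1 hf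
        exact hφa _ (ha _ (Finset.mem_of_mem_erase hf'))) _ (by
        intro c hc'
        have := Ideal.mem_map_of_mem φ.toRingHom (hm c hc')
        rwa [show φ.toRingHom (C c) = C c from φ.commutes c] at this) hcol
      refine hh.trans ?_
      push_cast
      gcongr
    intro τ _ G hG ha p hp hm hc
    cases nonempty_fintype τ
    by_cases hz : ∀ g ∈ G, g = 0
    · rw [hc.bot (by rw [Ideal.span_eq_bot]; exact hz)]
      simp
    push Not at hz
    obtain ⟨g1, hg1, hg10⟩ := hz
    obtain ⟨d, hd, hmin⟩ := exists_min_dvd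
      (((G ×ˢ (Finset.univ : Finset (Option τ))).image fun x => cf x.1 x.2)) ⟨cf g1 none, by
        simp only [Finset.mem_image, Finset.mem_product]
        exact ⟨(g1, none), by simp [hg1], rfl⟩⟩
    have hmin' : ∀ g ∈ G, ∀ o, d ∣ cf g o := by
      intro g hg o
      exact hmin _ (Finset.mem_image.2 ⟨(g, o), by simp [hg], rfl⟩)
    obtain ⟨⟨g0, o0⟩, h0, hd0⟩ := Finset.mem_image.1 hd
    have hg0 : g0 ∈ G := by simpa using h0
    simp only at hd0
    have hex : ∀ g ∈ G, ∃ g' ∈ Aff τ V, g = C d * g' := fun g hg =>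
      aff_dvd (ha g hg) d (hmin' g hg none) (fun i => hmin' g hg (some i))
    choose! h hha hh using hex
    have hdne : d ≠ 0 := by
      rintro rfl
      apply hg10
      rw [hh g1 hg1]; simp
    have hspan : Ideal.span (G : Set (MvPolynomial τ V)) =
        Ideal.span {C d} * Ideal.span ((G.image h : Finset _) : Set (MvPolynomial τ V)) := by
      rw [Ideal.span_mul_span']
      congr 1
      ext f
      simp only [Finset.coe_image, Set.singleton_mul, Set.mem_image, Finset.mem_coe,
        exists_exists_and_eq_and]
      constructor
      · intro hf
        exact ⟨f, hf, (hh f hf).symm⟩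
      · rintro ⟨f', hf', rfl⟩
        rw [← hh f' hf']; exact hf'
    rw [hspan] at hc
    rcases hc.div (by simpa using hdne) with h1 | h1
    · refine h1.trans ?_
      push_cast
      exact le_add_self
    · refine inner τ (G.image h) (Finset.card_image_le.trans hG) ?_ p hm h1 ⟨h g0,
        Finset.mem_image_of_mem _ hg0, o0, ?_⟩
      · intro f hf
        obtain ⟨f', hf', rfl⟩ := Finset.mem_image.1 hf
        exact hha _ hf'
      · have h2 : cf g0 o0 = d * cf (h g0) o0 := by
          conv_lhs => rw [hh g0 hg0]
          cases o0 <;> simp [cf, coeff_C_mul]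
        rw [hd0] at h2
        have : cf (h g0) o0 = 1 := by
          apply mul_left_cancel₀ hdne
          rw [← h2, mul_one]
        rw [this]; exact isUnit_one

theorem key_pid {B : Type*} [CommRing B] [IsDomain B] [IsPrincipalIdealRing B]
    (s : ℕ) (τ : Type) [Finite τ] (G : Finset (MvPolynomial τ B)) (hG : G.card ≤ s)
    (ha : ∀ g ∈ G, g ∈ Aff τ B) (p : Ideal (MvPolynomial τ B)) [hp : p.IsPrime]
    (hc : IsCol p (Ideal.span (G : Set (MvPolynomial τ B)))) : p.height ≤ s := by
  classical
  let P : Ideal B := p.comap C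
  have hP : P.IsPrime := Ideal.comap_isPrime _ _
  let V := Localization.AtPrime P
  let _ : Algebra (MvPolynomial τ B) (MvPolynomial τ V) := algebraMvPolynomial
  let M : Submonoid (MvPolynomial τ B) := P.primeCompl.map (C (σ := τ))
  have hloc : IsLocalization M (MvPolynomial τ V) := MvPolynomial.isLocalization _ _
  have hd : Disjoint (M : Set (MvPolynomial τ B)) (p : Set _) := by
    rw [Set.disjoint_left]
    rintro _ ⟨c, hc, rfl⟩ h
    exact hc h
  have hpid : IsPrincipalIdealRing V := by
    refine ⟨fun J => ?_⟩
    obtain ⟨b, hb⟩ := IsPrincipalIdealRing.principal (J.under B)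
    refine ⟨algebraMap B V b, ?_⟩
    rw [← IsLocalization.map_under P.primeCompl V J, hb]
    change Ideal.map _ (Ideal.span {b}) = Ideal.span _
    rw [Ideal.map_span, Set.image_singleton]
  have hprime := IsLocalization.isPrime_of_isPrime_disjoint M (MvPolynomial τ V) p hp hd
  rw [← IsLocalization.height_map_of_disjoint (S := MvPolynomial τ V) M p hd]
  have hc' := hc.map_loc (R' := MvPolynomial τ V) M
  have hm : algebraMap (MvPolynomial τ B) (MvPolynomial τ V) = MvPolynomial.map (algebraMap B V) :=
    rfl
  have hsp : Ideal.map (algebraMap (MvPolynomial τ B) (MvPolynomial τ V))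
      (Ideal.span (G : Set (MvPolynomial τ B))) =
      Ideal.span ((G.image (MvPolynomial.map (algebraMap B V)) : Finset _) :
        Set (MvPolynomial τ V)) := by
    rw [Ideal.map_span, Finset.coe_image, hm]
  rw [hsp] at hc'
  refine key_local s τ _ (Finset.card_image_le.trans hG) ?_ _ ?_ hc'
  · intro f hf
    obtain ⟨f', hf', rfl⟩ := Finset.mem_image.1 hf
    refine aff_hom _ (fun c => ⟨_, map_C _ c⟩) (fun i => ?_) (ha f' hf')
    rw [map_X]; exact X_mem_aff _
  · intro c hcm
    rw [← Localization.AtPrime.map_eq_maximalIdeal] at hcm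
    have : P.map (algebraMap B V) ≤ (p.map (algebraMap (MvPolynomial τ B) (MvPolynomial τ V))).comap C := by
      rw [Ideal.map_le_iff_le_comap]
      intro b hb
      rw [Ideal.mem_comap, Ideal.mem_comap]
      rw [← map_C, ← hm]
      exact Ideal.mem_map_of_mem _ hb
    exact this hcm

end QL

namespace QL
open MvPolynomial

attribute [local instance] MvPolynomial.gradedAlgebra

section coords
variable {k : Type*} [Field k]

lemma hom_one_induction {σ : Type*} {P : MvPolynomial σ k → Prop} (hX : ∀ i, P (X i)) (h0 : P 0)
    (hadd : ∀ a b, P a → P b → P (a + b)) (hsmul : ∀ (c : k) a, P a → P (c • a))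
    {l : MvPolynomial σ k} (hl : l.IsHomogeneous 1) : P l := by
  have : l ∈ Submodule.span k (Set.range (X : σ → MvPolynomial σ k)) := by
    rw [← homogeneousSubmodule_one_eq_span_X]; exact hl
  clear hl
  induction this using Submodule.span_induction with
  | mem x h => obtain ⟨i, rfl⟩ := h; exact hX i
  | zero => exact h0
  | add x y _ _ hx hy => exact hadd _ _ hx hy
  | smul a x _ hx => exact hsmul _ _ hx

lemma hom_one_aff {σ : Type*} {l : MvPolynomial σ k} (hl : l.IsHomogeneous 1) : l ∈ Aff σ k :=
  hom_one_induction (P := fun l => l ∈ Aff σ k) X_mem_aff (Submodule.zero_mem _)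
    (fun _ _ => Submodule.add_mem _) (fun c _ => Submodule.smul_mem _ c) hl

lemma coords {σ : Type} [Finite σ] {ι : Type} (v : ι → MvPolynomial σ k)
    (hv : ∀ i, (v i).IsHomogeneous 1) (hli : LinearIndependent k v) :
    Finite ι ∧ ∃ (n : ℕ) (Φ : MvPolynomial σ k ≃ₐ[k] MvPolynomial (Fin n ⊕ ι) k),
      (∀ i, Φ (v i) = X (Sum.inr i)) ∧
      ∀ l : MvPolynomial σ k, l.IsHomogeneous 1 → (Φ l).IsHomogeneous 1 := by
  classical
  let W := homogeneousSubmodule σ k 1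
  have hfd : FiniteDimensional k W := Module.Finite.iff_fg.2 (homogeneousSubmodule_fg σ k 1)
  let v' : ι → W := fun i => ⟨v i, hv i⟩
  have hli' : LinearIndependent k v' := LinearIndependent.of_comp W.subtype hli
  let b0 := Module.Basis.sumExtend hli'
  have hb0 : ∀ i, b0 (Sum.inl i) = v' i := by
    intro i
    simp [b0, Module.Basis.sumExtend]
    rfl
  have hfin : Finite (ι ⊕ Module.Basis.sumExtendIndex hli') := Module.Finite.finite_basis b0
  have hfι : Finite ι := Finite.of_injective _ (Sum.inl_injective (β := Module.Basis.sumExtendIndex hli'))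
  have hfτ : Finite (Module.Basis.sumExtendIndex hli') :=
    Finite.of_injective _ (Sum.inr_injective (α := ι))
  refine ⟨hfι, ?_⟩
  obtain ⟨n, ⟨e⟩⟩ := Finite.exists_equiv_fin (Module.Basis.sumExtendIndex hli')
  let b : Module.Basis (Fin n ⊕ ι) k W :=
    b0.reindex ((Equiv.sumComm _ _).trans (Equiv.sumCongr e (Equiv.refl _)))
  have hb : ∀ i, b (Sum.inr i) = v' i := by
    intro i
    simp only [b, Module.Basis.reindex_apply]
    rw [← hb0]
    rfl
  cases nonempty_fintype ι
  let Lm : W →ₗ[k] MvPolynomial (Fin n ⊕ ι) k := b.constr k (fun j => X j)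
  have hLm : ∀ j, Lm (b j) = X j := fun j => b.constr_basis k _ j
  have hLmh : ∀ w, (Lm w).IsHomogeneous 1 := by
    intro w
    rw [show Lm w = _ from b.constr_apply_fintype k _ w]
    refine IsHomogeneous.sum _ _ _ fun i _ => ?_
    exact (homogeneousSubmodule _ k 1).smul_mem _ (isHomogeneous_X _ _)
  let φ : MvPolynomial σ k →ₐ[k] MvPolynomial (Fin n ⊕ ι) k :=
    aeval (fun i => Lm ⟨X i, isHomogeneous_X _ _⟩)
  let ψ : MvPolynomial (Fin n ⊕ ι) k →ₐ[k] MvPolynomial σ k := aeval (fun j => (b j : MvPolynomial σ k))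
  have hφ : ∀ l (hl : l.IsHomogeneous 1), φ l = Lm ⟨l, hl⟩ := by
    intro l hl
    have : ∃ hl : l.IsHomogeneous 1, φ l = Lm ⟨l, hl⟩ := by
      refine hom_one_induction (P := fun l => ∃ hl : l.IsHomogeneous 1, φ l = Lm ⟨l, hl⟩) ?_ ?_ ?_ ?_ hl
      · intro i
        exact ⟨isHomogeneous_X _ _, by simp [φ]⟩
      · exact ⟨W.zero_mem, by rw [map_zero]; exact (map_zero Lm).symm⟩
      · rintro a b ⟨ha, ha'⟩ ⟨hb, hb'⟩
        exact ⟨W.add_mem ha hb, by rw [map_add, ha', hb', ← map_add]; rfl⟩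
      · rintro c a ⟨ha, ha'⟩
        exact ⟨W.smul_mem c ha, by rw [map_smul, ha', ← map_smul]; rfl⟩
    exact this.2
  have hψ : ∀ w : W, ψ (Lm w) = w := by
    intro w
    have : ψ.toLinearMap.comp Lm = W.subtype := by
      apply b.ext
      intro j
      simp only [LinearMap.comp_apply, hLm]
      simp [ψ]
    exact LinearMap.congr_fun this w
  let Φ : MvPolynomial σ k ≃ₐ[k] MvPolynomial (Fin n ⊕ ι) k := AlgEquiv.ofAlgHom φ ψ (by
      ext j : 1
      simp only [AlgHom.comp_apply, AlgHom.id_apply]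
      have : ψ (X j) = b j := by simp [ψ]
      rw [this, hφ _ (b j).2, hLm]) (by
      ext j : 1
      simp only [AlgHom.comp_apply, AlgHom.id_apply]
      rw [hφ _ (isHomogeneous_X _ _), hψ])
  refine ⟨n, Φ, ?_, ?_⟩
  · intro i
    change φ _ = _
    rw [hφ _ (hv i), ← hLm, hb]
  · intro l hl
    change (φ l).IsHomogeneous 1
    rw [hφ l hl]
    exact hLmh _

/-- coordinates adapted to a family of linear forms that may be dependent. -/
lemma coords_span {σ : Type} [Finite σ] {ν : Type} [Finite ν] (z : ν → MvPolynomial σ k)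
    (hz : ∀ i, (z i).IsHomogeneous 1) :
    ∃ (r n : ℕ) (Φ : MvPolynomial σ k ≃ₐ[k] MvPolynomial (Fin n ⊕ Fin r) k),
      (∀ i, Φ (z i) ∈ Submodule.span k (Set.range fun j : Fin r => X (Sum.inr j))) ∧
      (Ideal.span (Set.range z)).map (Φ : MvPolynomial σ k →+* MvPolynomial (Fin n ⊕ Fin r) k) =
        Ideal.span (Set.range fun j : Fin r => X (Sum.inr j)) ∧
      ∀ l : MvPolynomial σ k, l.IsHomogeneous 1 → (Φ l).IsHomogeneous 1 := by
  classical
  let Z := Submodule.span k (Set.range z)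
  have : FiniteDimensional k Z := FiniteDimensional.span_of_finite k (Set.finite_range z)
  let b := Module.finBasis k Z
  let v : Fin (Module.finrank k Z) → MvPolynomial σ k := fun i => b i
  have hZ : Z ≤ homogeneousSubmodule σ k 1 := by
    rw [Submodule.span_le]
    rintro _ ⟨i, rfl⟩
    exact hz i
  obtain ⟨-, n, Φ, h1, h2⟩ := coords v (fun i => hZ (b i).2)
    (b.linearIndependent.map' Z.subtype (by simp))
  have hspan : Submodule.span k (Set.range v) = Z := by
    have := congrArg (Submodule.map Z.subtype) b.span_eq
    rw [Submodule.map_span, ← Set.range_comp] at this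
    simp only [Submodule.map_top, Submodule.range_subtype] at this
    exact this
  have hsp2 : Z.map Φ.toLinearMap = Submodule.span k (Set.range fun j => X (Sum.inr j)) := by
    have h3 := congrArg (Submodule.map Φ.toLinearMap) hspan
    rw [← h3, Submodule.map_span, ← Set.range_comp]
    congr 2
    funext i
    exact h1 i
  have hmem : ∀ i, Φ (z i) ∈ Submodule.span k (Set.range fun j => X (Sum.inr j)) := by
    intro i
    rw [← hsp2]
    exact ⟨z i, Submodule.subset_span ⟨i, rfl⟩, rfl⟩
  have hle : ∀ {R : Type _} [CommRing R] [Algebra k R] (s : Set R),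
      (Submodule.span k s : Set R) ⊆ Ideal.span s := by
    intro R _ _ s
    exact Submodule.span_subset_span k R s
  refine ⟨_, n, Φ, hmem, ?_, h2⟩
  rw [Ideal.map_span]
  apply le_antisymm
  · rw [Ideal.span_le]
    rintro _ ⟨_, ⟨i, rfl⟩, rfl⟩
    exact hle _ (hmem i)
  · rw [Ideal.span_le]
    rintro _ ⟨j, rfl⟩
    have : X (Sum.inr j) ∈ Z.map Φ.toLinearMap := by
      rw [hsp2]; exact Submodule.subset_span ⟨j, rfl⟩
    rw [Submodule.map_span] at this
    exact hle _ this

lemma comp_pow_mul {σ : Type*} {e : MvPolynomial σ k} (he : e.IsHomogeneous 1) (n d : ℕ) (h : d < n)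
    (s : MvPolynomial σ k) : homogeneousComponent d (e ^ n * s) = 0 := by
  rw [← sum_homogeneousComponent s, Finset.mul_sum, map_sum]
  refine Finset.sum_eq_zero fun i _ => ?_
  have : (e ^ n * homogeneousComponent i s).IsHomogeneous (1 * n + i) :=
    (he.pow n).mul (homogeneousComponent_isHomogeneous i s)
  rw [homogeneousComponent_of_mem this, if_neg (by omega)]

lemma no_poly {σ : Type*} {I p : Ideal (MvPolynomial σ k)}
    (hI : I.IsHomogeneous (homogeneousSubmodule σ k)) [hp : p.IsPrime] (hc : IsCol p I)
    {e : MvPolynomial σ k} (he : e.IsHomogeneous 1) (hep : e ∉ p) :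
    ∀ (N : ℕ) (g : Polynomial k), g.natDegree < N → Polynomial.aeval e g ∈ p → g = 0 := by
  intro N
  induction N with
  | zero => intro g h; omega
  | succ N ih =>
    intro g hN hg
    have hdec := Polynomial.divX_mul_X_add g
    have hev : Polynomial.aeval e g = Polynomial.aeval e g.divX * e + C (g.coeff 0) := by
      conv_lhs => rw [← hdec]
      simp [algebraMap_eq]
    by_cases h0 : g.coeff 0 = 0
    · rw [h0, C_0, add_zero] at hev
      rw [hev] at hg
      have h1 := (hp.mem_or_mem hg).resolve_right hep
      by_cases hdeg : g.natDegree = 0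
      · rw [Polynomial.eq_C_of_natDegree_eq_zero hdeg, h0, Polynomial.C_0]
      · have h2 := ih g.divX (by rw [Polynomial.natDegree_divX_eq_natDegree_tsub_one]; omega) h1
        rw [← hdec, h2, h0]; simp
    · exfalso
      obtain ⟨f, hf⟩ := hc
      set h := Polynomial.aeval e g.divX
      set c := g.coeff 0
      rw [hev, hf] at hg
      have key : ∀ n : ℕ, C c ^ n * f - (-(h * e)) ^ n * f ∈ I := by
        intro n
        induction n with
        | zero => simp
        | succ n ihn =>
          have := I.add_mem (I.mul_mem_left (C c) ihn) (I.mul_mem_left ((-(h * e)) ^ n) hg)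
          convert this using 1
          ring
      have hfI : f ∈ I := by
        rw [mem_iff_homogeneousComponent_mem hI]
        intro d
        have h1 := homogeneousComponent_mem_of_mem hI (key (d + 1)) d
        have h2 : homogeneousComponent d ((-(h * e)) ^ (d + 1) * f) = 0 := by
          have : (-(h * e)) ^ (d + 1) * f = e ^ (d + 1) * ((-h) ^ (d + 1) * f) := by ring
          rw [this]
          exact comp_pow_mul he _ _ (by omega) _
        rw [map_sub, h2, sub_zero, ← C_pow, homogeneousComponent_C_mul] at h1
        have h3 := I.mul_mem_left (C ((c ^ (d + 1))⁻¹)) h1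
        rwa [← mul_assoc, ← C_mul, inv_mul_cancel₀ (pow_ne_zero _ h0), C_1, one_mul] at h3
      exact hp.ne_top ((Ideal.eq_top_iff_one p).2 ((hf 1).2 (by simpa using hfI)))

lemma extended_prime {τ A : Type*} [CommRing A] [Algebra k A] (ε : A →ₐ[k] k)
    {I0 : Ideal A} {p : Ideal (MvPolynomial τ A)} [hp : p.IsPrime] (hc : IsCol p (I0.map C))
    (hm : ∀ c, ε c = 0 → C c ∈ p) (r : MvPolynomial τ A) (hr : r ∈ p) (m : τ →₀ ℕ) :
    ε (coeff m r) = 0 := by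
  classical
  set r1 : MvPolynomial τ k := MvPolynomial.map ε.toRingHom r with hr1
  set r0 : MvPolynomial τ A := MvPolynomial.map (algebraMap k A) r1 with hr0
  have hsub : r - r0 ∈ p := by
    have : r - r0 ∈ Ideal.map (C : A →+* MvPolynomial τ A) (RingHom.ker ε.toRingHom) := by
      rw [mem_map_C_iff]
      intro m
      rw [RingHom.mem_ker, coeff_sub, hr0, hr1, coeff_map, coeff_map, map_sub]
      change ε _ - ε (algebraMap k A (ε _)) = 0
      rw [AlgHom.commutes]
      simp
    refine (Ideal.map_le_iff_le_comap.2 ?_) this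
    intro c hcc
    exact hm c hcc
  have hr0p : r0 ∈ p := by
    have := p.sub_mem hr hsub
    simpa using this
  suffices r1 = 0 by
    have h := congrArg (coeff m) this
    rw [hr1, coeff_map, coeff_zero] at h
    exact h
  by_contra hne
  obtain ⟨f, hf⟩ := hc
  have hfI : f ∉ I0.map (C : A →+* MvPolynomial τ A) := by
    intro h
    exact hp.ne_top ((Ideal.eq_top_iff_one p).2 ((hf 1).2 (by simpa using h)))
  rw [mem_map_C_iff] at hfI
  push Not at hfI
  obtain ⟨m0, hm0⟩ := hfI
  obtain ⟨lam, hlam, hle⟩ := Submodule.exists_le_ker_of_notMem (p := I0.restrictScalars k) hm0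
  let F : MvPolynomial τ k := ∑ n ∈ f.support, monomial n (lam (coeff n f))
  have hF : ∀ n, coeff n F = lam (coeff n f) := by
    intro n
    simp only [F, coeff_sum, coeff_monomial, Finset.sum_ite_eq', mem_support_iff]
    split_ifs with h
    · rfl
    · push Not at h
      rw [h, map_zero]
  have hprod : r1 * F = 0 := by
    ext n
    have h1 := mem_map_C_iff.1 ((hf r0).1 hr0p) n
    have h2 : lam (coeff n (r0 * f)) = 0 := hle h1
    rw [coeff_mul, map_sum] at h2
    rw [coeff_mul, coeff_zero, ← h2]
    refine Finset.sum_congr rfl fun x _ => ?_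
    have h5 : coeff x.1 r0 = algebraMap k A (coeff x.1 r1) := coeff_map _ _ _
    rw [hF, h5, ← Algebra.smul_def, map_smul, smul_eq_mul]
  rcases mul_eq_zero.1 hprod with h | h
  · exact hne h
  · apply hlam
    rw [← hF, h, coeff_zero]

end coords
end QL

namespace QL
open MvPolynomial

attribute [local instance] MvPolynomial.gradedAlgebra

def Good {R R' : Type*} [CommRing R] [CommRing R'] (Θ : R →+* R') (p I : Ideal R) : Prop :=
  (p.map Θ).IsPrime ∧ IsCol (p.map Θ) (I.map Θ) ∧ p.height ≤ (p.map Θ).height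

lemma Good.comp {R R' R'' : Type*} [CommRing R] [CommRing R'] [CommRing R''] {Θ : R →+* R'}
    {Θ' : R' →+* R''} {p I : Ideal R} (h : Good Θ p I) (h' : Good Θ' (p.map Θ) (I.map Θ)) :
    Good (Θ'.comp Θ) p I := by
  obtain ⟨h1, h2, h3⟩ := h'
  rw [Ideal.map_map] at h1 h2 h3
  rw [Ideal.map_map] at h2
  exact ⟨h1, h2, h.2.2.trans h3⟩

lemma good_equiv {R R' : Type*} [CommRing R] [CommRing R'] (e : R ≃+* R') {p I : Ideal R}
    [p.IsPrime] (h : IsCol p I) : Good (e : R →+* R') p I := by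
  have hk : RingHom.ker (e : R →+* R') = ⊥ := (RingHom.injective_iff_ker_eq_bot _).1 e.injective
  refine ⟨Ideal.map_isPrime_of_surjective (f := (e : R →+* R')) e.surjective (by rw [hk]; exact bot_le),
    h.map_surj _ e.surjective (by rw [hk]; exact bot_le), ?_⟩
  exact (e.height_map p).ge

lemma mem_map_equiv {R R' : Type*} [CommRing R] [CommRing R'] (e : R ≃+* R') {p : Ideal R} {y : R'}
    (h : y ∈ p.map (e : R →+* R')) : ∃ r ∈ p, e r = y :=
  (Ideal.mem_map_iff_of_surjective (e : R →+* R') e.surjective).1 h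

lemma good_loc {R R' : Type*} [CommRing R] [CommRing R'] [Algebra R R'] (M : Submonoid R)
    [IsLocalization M R'] {p I : Ideal R} [p.IsPrime] (h : IsCol p I)
    (hd : Disjoint (M : Set R) (p : Set R)) : Good (algebraMap R R') p I :=
  ⟨IsLocalization.isPrime_of_isPrime_disjoint M R' p ‹_› hd, h.map_loc M,
    (IsLocalization.height_map_of_disjoint M p hd).ge⟩

section loc
variable {k : Type*} [Field k]

def shuffle (n : ℕ) (κ : Type) : Fin n ⊕ Option (Option κ) ≃ Option (Option (Fin n ⊕ κ)) where
  toFun := fun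
    | Sum.inl i => some (some (Sum.inl i))
    | Sum.inr none => none
    | Sum.inr (some none) => some none
    | Sum.inr (some (some i)) => some (some (Sum.inr i))
  invFun := fun
    | none => Sum.inr none
    | some none => Sum.inr (some none)
    | some (some (Sum.inl i)) => Sum.inl i
    | some (some (Sum.inr i)) => Sum.inr (some (some i))
  left_inv := by rintro (i | _ | _ | i) <;> rfl
  right_inv := by rintro (_ | _ | i | i) <;> rfl

/-- pass from `k[X][Option τ]` to `L[X][τ]`, where `L = k(X)`. -/
noncomputable def locMap (k L : Type*) [Field k] [Field L] [Algebra (Polynomial k) L] (τ : Type) :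
    MvPolynomial (Option τ) (Polynomial k) →+* MvPolynomial τ (Polynomial L) :=
  ((optionEquivRight L τ).toRingEquiv.toRingHom).comp (MvPolynomial.map (algebraMap _ L))

lemma loc1 {σ : Type} [Finite σ] {κ : Type} (v : Option (Option κ) → MvPolynomial σ k)
    (hv : ∀ i, (v i).IsHomogeneous 1) (hli : LinearIndependent k v) :
    Finite κ ∧ ∃ (n : ℕ) (Ψ : MvPolynomial σ k ≃ₐ[k]
      MvPolynomial (Option (Fin n ⊕ κ)) (Polynomial k)),
      Ψ (v none) = C Polynomial.X ∧ Ψ (v (some none)) = X none ∧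
      (∀ i, Ψ (v (some (some i))) = X (some (Sum.inr i))) ∧
      (∀ c, Ψ (C c) = C (Polynomial.C c)) ∧
      ∀ l : MvPolynomial σ k, l.IsHomogeneous 1 → Ψ l ∈ Aff _ (Polynomial k) := by
  classical
  obtain ⟨hfin, n, Φ, hΦv, hΦh⟩ := coords v hv hli
  have hfκ : Finite κ := Finite.of_injective (fun i : κ => (some (some i) : Option (Option κ)))
    (fun a b h => by simpa using h)
  let τ := Fin n ⊕ κ
  let Ψ : MvPolynomial σ k ≃ₐ[k] MvPolynomial (Option τ) (Polynomial k) :=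
    (Φ.trans (renameEquiv k (shuffle n κ))).trans (optionEquivRight k (Option τ))
  have hΨe : Ψ (v none) = C Polynomial.X := by
    simp only [Ψ, AlgEquiv.trans_apply, hΦv, renameEquiv_apply, rename_X]
    exact optionEquivRight_X_none _ _
  have hΨt : Ψ (v (some none)) = X none := by
    simp only [Ψ, AlgEquiv.trans_apply, hΦv, renameEquiv_apply, rename_X]
    exact optionEquivRight_X_some _ _ _
  have hΨi : ∀ i, Ψ (v (some (some i))) = X (some (Sum.inr i)) := by
    intro i
    simp only [Ψ, AlgEquiv.trans_apply, hΦv, renameEquiv_apply, rename_X]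
    exact optionEquivRight_X_some _ _ _
  have hΨC : ∀ c, Ψ (C c) = C (Polynomial.C c) := by
    intro c
    simp only [Ψ, AlgEquiv.trans_apply]
    rw [← algebraMap_eq, Φ.commutes, algebraMap_eq, renameEquiv_apply, rename_C, optionEquivRight_C]
  have hΨh : ∀ l : MvPolynomial σ k, l.IsHomogeneous 1 → Ψ l ∈ Aff (Option τ) (Polynomial k) := by
    intro l hl
    have h1 := hom_one_aff (hΦh l hl)
    let Ψ' := (renameEquiv k (shuffle n κ)).trans (optionEquivRight k (Option τ))
    refine aff_hom Ψ'.toAlgHom.toRingHom ?_ ?_ h1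
    · intro c
      refine ⟨Polynomial.C c, ?_⟩
      change Ψ' (C c) = _
      simp only [Ψ', AlgEquiv.trans_apply, renameEquiv_apply, rename_C, optionEquivRight_C]
    · intro i
      change Ψ' (X i) ∈ _
      simp only [Ψ', AlgEquiv.trans_apply, renameEquiv_apply, rename_X]
      rcases h : shuffle n κ i with _ | j
      · rw [optionEquivRight_X_none]; exact C_mem_aff _
      · rw [optionEquivRight_X_some]; exact X_mem_aff _
  exact ⟨hfκ, n, Ψ, hΨe, hΨt, hΨi, hΨC, hΨh⟩

variable (L : Type*) [Field L] [Algebra (Polynomial k) L]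

lemma locMap_apply (τ : Type) (r : MvPolynomial (Option τ) (Polynomial k)) :
    locMap k L τ r = optionEquivRight L τ (MvPolynomial.map (algebraMap _ _) r) := by
  simp [locMap]

lemma locMap_C (τ : Type) (c : Polynomial k) :
    locMap k L τ (C c) = C (Polynomial.C (algebraMap _ _ c)) := by
  rw [locMap_apply, map_C, optionEquivRight_C]

lemma locMap_none (τ : Type) : locMap k L τ (X none) = C Polynomial.X := by
  rw [locMap_apply, map_X, optionEquivRight_X_none]

lemma locMap_some (τ : Type) (i : τ) : locMap k L τ (X (some i)) = X i := by
  rw [locMap_apply, map_X, optionEquivRight_X_some]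

attribute [local instance] MvPolynomial.algebraMvPolynomial in
lemma locMap_good [IsFractionRing (Polynomial k) L]
    (τ : Type) {p I : Ideal (MvPolynomial (Option τ) (Polynomial k))} [p.IsPrime]
    (hc : IsCol p I) (hd : ∀ g : Polynomial k, C g ∈ p → g = 0) :
    Good (R' := MvPolynomial τ (Polynomial L)) (locMap k L τ) p I := by
  have hdisj : Disjoint (((nonZeroDivisors (Polynomial k)).map (C (σ := Option τ)) :
      Submonoid (MvPolynomial (Option τ) (Polynomial k))) :
        Set (MvPolynomial (Option τ) (Polynomial k))) (p : Set _) := by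
    rw [Set.disjoint_left]
    rintro _ ⟨g, hg, rfl⟩ hmem
    exact nonZeroDivisors.ne_zero hg (hd g hmem)
  have hg2 := good_loc (R' := MvPolynomial (Option τ) L) _ hc hdisj
  have := hg2.1
  exact hg2.comp (good_equiv (optionEquivRight L τ).toRingEquiv hg2.2.1)

lemma locMap_good2 [IsFractionRing (Polynomial k) L] {τ : Type} {R : Type*} [CommRing R]
    (E : R ≃+* MvPolynomial (Option τ) (Polynomial k))
    {I p : Ideal R} [hp : p.IsPrime] (hc : IsCol p I)
    (hd : ∀ (g : Polynomial k) (r : R), E r = C g → r ∈ p → g = 0) :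
    ∃ Θ : R →+* MvPolynomial τ (Polynomial L), (∀ r, Θ r = locMap k L τ (E r)) ∧
    Good (R' := MvPolynomial τ (Polynomial L)) Θ p I := by
  have hg1 := good_equiv E hc
  have := hg1.1
  have h2 : Good (R' := MvPolynomial τ (Polynomial L)) (locMap k L τ)
      (p.map (E : R →+* _)) (I.map (E : R →+* _)) := by
    refine locMap_good L τ hg1.2.1 ?_
    intro g hmem
    obtain ⟨r, hr, hrg⟩ := mem_map_equiv E hmem
    exact hd g r hrg hr
  have h3 := hg1.comp h2
  refine ⟨_, ?_, h3⟩
  intro r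
  rfl

lemma aeval_eq_C {σ τ : Type} {e : MvPolynomial σ k}
    (Ψ : MvPolynomial σ k ≃ₐ[k] MvPolynomial (Option τ) (Polynomial k))
    (hΨe : Ψ e = C Polynomial.X) (g : Polynomial k) : Ψ (Polynomial.aeval e g) = C g := by
  have h2 := Polynomial.aeval_algHom_apply Ψ.toAlgHom e g
  have h3 := Polynomial.aeval_algHom_apply (IsScalarTower.toAlgHom k (Polynomial k)
    (MvPolynomial (Option τ) (Polynomial k))) Polynomial.X g
  have h4 : Ψ.toAlgHom e = IsScalarTower.toAlgHom k (Polynomial k)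
    (MvPolynomial (Option τ) (Polynomial k)) Polynomial.X := hΨe
  rw [h4, h3, Polynomial.aeval_X_left_apply] at h2
  exact h2.symm

lemma loc2 [IsFractionRing (Polynomial k) L] {σ τ : Type}
    {I p : Ideal (MvPolynomial σ k)} (hI : I.IsHomogeneous (homogeneousSubmodule σ k))
    [hp : p.IsPrime] (hc : IsCol p I) {e : MvPolynomial σ k} (he : e.IsHomogeneous 1) (hep : e ∉ p)
    (Ψ : MvPolynomial σ k ≃ₐ[k] MvPolynomial (Option τ) (Polynomial k))
    (hΨe : Ψ e = C Polynomial.X) :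
    ∃ Θ : MvPolynomial σ k →+* MvPolynomial τ (Polynomial L), (∀ r, Θ r = locMap k L τ (Ψ r)) ∧
    Good (R' := MvPolynomial τ (Polynomial L)) Θ p I := by
  refine locMap_good2 L Ψ.toRingEquiv hc ?_
  intro g r hrg hr
  have h5 : r = Polynomial.aeval e g := Ψ.injective (Eq.trans hrg (aeval_eq_C Ψ hΨe g).symm)
  rw [h5] at hr
  exact no_poly hI hc he hep _ g (Nat.lt_succ_self _) hr

lemma loc [IsFractionRing (Polynomial k) L] {σ : Type} [Finite σ] {κ : Type} (v : Option (Option κ) → MvPolynomial σ k)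
    (hv : ∀ i, (v i).IsHomogeneous 1) (hli : LinearIndependent k v)
    {I p : Ideal (MvPolynomial σ k)} (hI : I.IsHomogeneous (homogeneousSubmodule σ k))
    [hp : p.IsPrime] (hc : IsCol p I) (hep : v none ∉ p) :
    ∃ (n : ℕ) (Θ : MvPolynomial σ k →+* MvPolynomial (Fin n ⊕ κ)
        (Polynomial L)),
      Finite κ ∧
      Good (R' := MvPolynomial (Fin n ⊕ κ) (Polynomial L)) Θ p I ∧ (∃ c, IsUnit c ∧ Θ (v none) = C c) ∧ (∃ c, Θ (v (some none)) = C c) ∧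
      (∀ i, Θ (v (some (some i))) = X (Sum.inr i)) ∧
      (∀ l : MvPolynomial σ k, l.IsHomogeneous 1 → Θ l ∈ Aff _ _) ∧
      ∀ c, ∃ c', Θ (C c) = C c' := by
  classical
  obtain ⟨hfκ, n, Ψ, hΨe, hΨt, hΨi, hΨC, hΨh⟩ := loc1 v hv hli
  obtain ⟨Θ, hΘ, hg⟩ := loc2 L hI hc (hv none) hep Ψ hΨe
  refine ⟨n, Θ, hfκ, hg, ?_, ?_, ?_, ?_, ?_⟩
  · refine ⟨Polynomial.C (algebraMap (Polynomial k) _ Polynomial.X), ?_, ?_⟩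
    · rw [Polynomial.isUnit_C]
      exact (map_ne_zero_iff _ (IsFractionRing.injective (Polynomial k) L)).2 Polynomial.X_ne_zero
        |>.isUnit
    · rw [hΘ]
      rw [hΨe, locMap_C]
  · refine ⟨Polynomial.X, ?_⟩
    rw [hΘ]
    rw [hΨt, locMap_none]
  · intro i
    rw [hΘ]
    rw [hΨi, locMap_some]
  · intro l hl
    rw [hΘ]
    refine aff_hom (locMap k L _) ?_ ?_ (hΨh l hl)
    · intro c
      exact ⟨_, locMap_C L _ c⟩
    · intro i
      rcases i with _ | j
      · rw [locMap_none]; exact C_mem_aff _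
      · rw [locMap_some]; exact X_mem_aff _
  · intro c
    refine ⟨Polynomial.C (algebraMap _ _ (Polynomial.C c)), ?_⟩
    rw [hΘ]
    rw [hΨC, locMap_C]

end loc
end QL

namespace QL
open MvPolynomial

section core
variable {B : Type*} [CommRing B] [IsDomain B] [IsPrincipalIdealRing B]

lemma key_fam {τ : Type} [Finite τ] {β : Type*} [Fintype β] (g : β → MvPolynomial τ B)
    (ha : ∀ i, g i ∈ Aff τ B) {p : Ideal (MvPolynomial τ B)} [p.IsPrime]
    (hc : IsCol p (Ideal.span (Set.range g))) : p.height ≤ (Fintype.card β : ℕ) := by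
  classical
  refine key_pid (Fintype.card β) τ (Finset.univ.image g) Finset.card_image_le ?_ p ?_
  · intro f hf
    obtain ⟨i, -, rfl⟩ := Finset.mem_image.1 hf
    exact ha i
  · simpa using hc

/-- ideal generated by common multiples of `d`. -/
lemma key_div {τ : Type} [Finite τ] {β : Type*} [Fintype β] (d : MvPolynomial τ B)
    (g : β → MvPolynomial τ B)
    (ha : ∀ i, g i ∈ Aff τ B) {p : Ideal (MvPolynomial τ B)} [p.IsPrime]
    (hc : IsCol p (Ideal.span (Set.range fun i => d * g i))) :
    p.height ≤ (Fintype.card β : ℕ) := by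
  classical
  by_cases hd : d = 0
  · have : p.height = 0 := hc.bot (by
      rw [Ideal.span_eq_bot]
      rintro _ ⟨i, rfl⟩
      simp [hd])
    rw [this]; exact zero_le
  rcases isEmpty_or_nonempty β with hβ | hβ
  · have : p.height = 0 := hc.bot (by
      rw [Ideal.span_eq_bot]
      rintro _ ⟨i, rfl⟩
      exact hβ.elim i)
    rw [this]; exact zero_le
  have he : Ideal.span (Set.range fun i => d * g i) = Ideal.span {d} * Ideal.span (Set.range g) := by
    rw [Ideal.span_mul_span', Set.singleton_mul, ← Set.range_comp]
    rfl
  rw [he] at hc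
  rcases hc.div hd with h | h
  · refine h.trans ?_
    have : 1 ≤ Fintype.card β := Fintype.card_pos
    exact_mod_cast this
  · exact key_fam g ha h

lemma core {τ : Type} [Finite τ] {s : ℕ} (q a b : Fin s → MvPolynomial τ B) (i0 : Fin s)
    (y : MvPolynomial τ B) (j : τ) (c t : B) (hcu : IsUnit c)
    (hy : y ∈ Aff τ B) (hyj : coeff (Finsupp.single j 1) y = 0)
    (ha : ∀ i, a i ∈ Aff τ B) (hb : ∀ i, b i ∈ Aff τ B)
    (hq0 : q i0 = C c * X j + C t * y) (hq : ∀ i, i ≠ i0 → q i = a i * X j + b i * y)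
    {p : Ideal (MvPolynomial τ B)} [p.IsPrime]
    (hc : IsCol p (Ideal.span (Set.range q))) : p.height ≤ (s : ℕ) := by
  classical
  have hg : q i0 ∈ Aff τ B := by
    rw [hq0]
    exact Submodule.add_mem _ (C_mul_mem_aff _ (X_mem_aff _)) (C_mul_mem_aff _ hy)
  have hu : IsUnit (coeff (Finsupp.single j 1) (q i0)) := by
    rw [hq0, coeff_add, coeff_C_mul, coeff_C_mul, hyj, coeff_X]
    simpa using hcu
  obtain ⟨φ, h1, h2, h3, h4, h5⟩ := elim_height hc hg (Ideal.subset_span ⟨i0, rfl⟩) j hu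
  obtain ⟨w, hw⟩ := hcu.exists_left_inv
  have hx : φ (X j) = - (C (w * t) * φ y) := by
    rw [hq0, map_add, map_mul, map_mul] at h2
    have e1 : ∀ c, φ (C c) = C c := fun c => φ.commutes c
    rw [e1, e1] at h2
    have e2 : (C w : MvPolynomial {i // i ≠ j} B) * C c = 1 := by rw [← C_mul, hw, C_1]
    rw [C_mul]
    linear_combination (C w) * h2 - φ (X j) * e2
  let g : {i // i ≠ i0} → MvPolynomial {i // i ≠ j} B :=
    fun i => φ (b i) - C (w * t) * φ (a i)
  have hgi : ∀ i, g i ∈ Aff _ B := fun i =>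
    Submodule.sub_mem _ (h1 _ (hb i)) (C_mul_mem_aff _ (h1 _ (ha i)))
  have hspan : (Ideal.span (Set.range q)).map φ.toRingHom =
      Ideal.span (Set.range fun i => φ y * g i) := by
    rw [Ideal.map_span]
    apply le_antisymm
    · rw [Ideal.span_le]
      rintro _ ⟨_, ⟨i, rfl⟩, rfl⟩
      change φ (q i) ∈ _
      by_cases hi : i = i0
      · rw [hi, h2]; exact Ideal.zero_mem _
      · refine Ideal.subset_span ⟨⟨i, hi⟩, ?_⟩
        simp only [g]
        rw [hq i hi, map_add, map_mul φ, map_mul φ, hx]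
        ring
    · rw [Ideal.span_le]
      rintro _ ⟨⟨i, hi⟩, rfl⟩
      refine Ideal.subset_span ⟨_, ⟨i, rfl⟩, ?_⟩
      change φ (q i) = _
      simp only [g]
      rw [hq i hi, map_add, map_mul φ, map_mul φ, hx]
      ring
  rw [hspan] at h4
  have h6 := key_div (φ y) g hgi h4
  have hcard : Fintype.card {i // i ≠ i0} + 1 = s := by
    have := Fintype.card_subtype_compl (fun i => i = i0)
    have hs : 1 ≤ s := by have := i0.2; omega
    simp at this
    simp; omega
  calc p.height ≤ _ := h5
    _ ≤ (Fintype.card {i // i ≠ i0} : ℕ) + 1 := by gcongr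
    _ = s := by exact_mod_cast hcard

end core
end QL

namespace QL
open MvPolynomial

attribute [local instance] MvPolynomial.gradedAlgebra

section cases
variable {k : Type*} [Field k] {σ : Type}

lemma hom_span {s : ℕ} {q a b : Fin s → MvPolynomial σ k} {x y : MvPolynomial σ k}
    (hx : x.IsHomogeneous 1) (hy : y.IsHomogeneous 1)
    (ha : ∀ i, (a i).IsHomogeneous 1) (hb : ∀ i, (b i).IsHomogeneous 1)
    (hq : ∀ i, q i = a i * x + b i * y) :
    (Ideal.span (Set.range q)).IsHomogeneous (homogeneousSubmodule σ k) := by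
  apply Ideal.homogeneous_span
  rintro _ ⟨i, rfl⟩
  refine ⟨2, ?_⟩
  rw [hq]
  exact ((ha i).mul hx).add ((hb i).mul hy)

variable [Finite σ]

lemma map_span_range {R R' β : Type*} [CommRing R] [CommRing R'] (Θ : R →+* R') (q : β → R) :
    (Ideal.span (Set.range q)).map Θ = Ideal.span (Set.range fun i => Θ (q i)) := by
  rw [Ideal.map_span, ← Set.range_comp]
  rfl

lemma caseX {s : ℕ} {q a b : Fin s → MvPolynomial σ k} {x y : MvPolynomial σ k}
    (hx : x.IsHomogeneous 1) (hy : y.IsHomogeneous 1) (hxy : LinearIndependent k ![x, y])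
    (ha : ∀ i, (a i).IsHomogeneous 1) (hb : ∀ i, (b i).IsHomogeneous 1)
    (hq : ∀ i, q i = a i * x + b i * y)
    {p : Ideal (MvPolynomial σ k)} [p.IsPrime] (hc : IsCol p (Ideal.span (Set.range q)))
    (hxp : x ∉ p) : p.height ≤ (s : ℕ) := by
  let f : Option (Option Empty) ≃ Fin 2 :=
    ⟨fun | none => 0 | some _ => 1, fun i => if i = 0 then none else some none,
      by rintro (_ | _ | i) <;> first | rfl | exact i.elim, by intro i; fin_cases i <;> rfl⟩
  let v : Option (Option Empty) → MvPolynomial σ k := ![x, y] ∘ f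
  have hv0 : v none = x := rfl
  have hv1 : v (some none) = y := rfl
  obtain ⟨n, Θ, -, hg, ⟨c, -, h1⟩, ⟨c', h2⟩, -, h4, -⟩ := loc (FractionRing (Polynomial k)) v
    (by rintro (_ | _ | i)
        · exact hx
        · exact hy
        · exact i.elim)
    (hxy.comp f f.injective) (hom_span hx hy ha hb hq) hc hxp
  rw [hv0] at h1
  rw [hv1] at h2
  have := hg.1
  refine hg.2.2.trans ?_
  have h5 := hg.2.1
  rw [map_span_range] at h5
  have h6 := key_fam _ ?_ h5
  · simpa using h6
  · intro i
    rw [hq, map_add, map_mul, map_mul, h1, h2, mul_comm, mul_comm (Θ (b i))]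
    exact Submodule.add_mem _ (C_mul_mem_aff _ (h4 _ (ha i))) (C_mul_mem_aff _ (h4 _ (hb i)))

lemma caseA {κ : Type} {s : ℕ} {q a b : Fin s → MvPolynomial σ k} {x y : MvPolynomial σ k}
    (v : Option (Option κ) → MvPolynomial σ k)
    (hv : ∀ i, (v i).IsHomogeneous 1) (hli : LinearIndependent k v)
    (hI : (Ideal.span (Set.range q)).IsHomogeneous (homogeneousSubmodule σ k))
    (ha : ∀ i, (a i).IsHomogeneous 1) (hb : ∀ i, (b i).IsHomogeneous 1)
    (ix : κ) (hx : x = v (some (some ix)))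
    (hy : y = v (some none) ∨ ∃ iy, iy ≠ ix ∧ y = v (some (some iy)))
    (i0 : Fin s) (κ0 : k) (hq0 : q i0 = v none * x + C κ0 * v (some none) * y)
    (hq : ∀ i, i ≠ i0 → q i = a i * x + b i * y)
    {p : Ideal (MvPolynomial σ k)} [p.IsPrime] (hc : IsCol p (Ideal.span (Set.range q)))
    (hxp : v none ∉ p) : p.height ≤ (s : ℕ) := by
  classical
  obtain ⟨n, Θ, hfin, hg, ⟨c, hcu, h1⟩, ⟨c', h2⟩, h3, h4, h7⟩ :=
    loc (FractionRing (Polynomial k)) v hv hli hI hc hxp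
  have := hg.1
  refine hg.2.2.trans ?_
  have h5 := hg.2.1
  rw [map_span_range] at h5
  obtain ⟨κ', h8⟩ := h7 κ0
  refine core (fun i => Θ (q i)) (fun i => Θ (a i)) (fun i => Θ (b i)) i0 (Θ y) (Sum.inr ix) c
    (κ' * c') hcu ?_ ?_ (fun i => h4 _ (ha i)) (fun i => h4 _ (hb i)) ?_ ?_ h5
  · rcases hy with rfl | ⟨iy, -, rfl⟩ <;> exact h4 _ (hv _)
  · rcases hy with rfl | ⟨iy, hne, rfl⟩
    · rw [h2, coeff_C, if_neg]
      intro h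
      have := congrArg (fun f => f (Sum.inr ix)) h
      simp at this
    · rw [h3, coeff_X, if_neg]
      intro h
      have := Finsupp.single_left_injective one_ne_zero h
      simp at this
      exact hne this
  · change Θ (q i0) = _
    rw [hq0, map_add, map_mul, map_mul, map_mul, h1, h2, h8, hx, h3, C_mul]
  · intro i hi
    change Θ (q i) = _
    rw [hq i hi, map_add, map_mul, map_mul, hx, h3]

end cases
end QL

namespace QL
open MvPolynomial

attribute [local instance] MvPolynomial.gradedAlgebra

section cases2
variable {k : Type*} [Field k] {σ : Type} [Finite σ]

lemma caseC {s : ℕ} {q a b : Fin s → MvPolynomial σ k} {x y : MvPolynomial σ k}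
    (hx : x.IsHomogeneous 1) (hy : y.IsHomogeneous 1) (hxy : LinearIndependent k ![x, y])
    (ha : ∀ i, (a i).IsHomogeneous 1) (hb : ∀ i, (b i).IsHomogeneous 1)
    (hq : ∀ i, q i = a i * x + b i * y)
    {p : Ideal (MvPolynomial σ k)} [hp : p.IsPrime] (hc : IsCol p (Ideal.span (Set.range q)))
    (hxp : x ∈ p) (hyp : y ∈ p) (i0 : Fin s) (hap : a i0 ∉ p) : p.height ≤ (s : ℕ) := by
  have hI := hom_span hx hy ha hb hq
  have h3 : LinearIndependent k ![a i0, x, y] := by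
    refine linearIndependent_finCons.2 ⟨hxy, ?_⟩
    intro h
    have hle : Submodule.span k (Set.range ![x, y]) ≤ p.restrictScalars k := by
      rw [Submodule.span_le]
      rintro _ ⟨i, rfl⟩
      fin_cases i
      · exact hxp
      · exact hyp
    exact hap (hle h)
  by_cases hB : b i0 ∈ Submodule.span k (Set.range ![a i0, x, y])
  · rw [Submodule.mem_span_range_iff_exists_fun] at hB
    obtain ⟨g, hg⟩ := hB
    rw [Fin.sum_univ_three] at hg
    simp only [Matrix.cons_val_zero, Matrix.cons_val_one, Matrix.cons_val, smul_eq_C_mul] at hg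
    set γ := g 0
    set α := g 1
    set β := g 2
    have h4 : LinearIndependent k ![a i0 + C α * y, x + C γ * y, y] := by
      rw [Fintype.linearIndependent_iff] at h3 ⊢
      intro w hw
      have h5 := h3 ![w 0, w 1, w 2 + α * w 0 + γ * w 1] (by
        rw [Fin.sum_univ_three] at hw ⊢
        simp only [Matrix.cons_val_zero, Matrix.cons_val_one, Matrix.cons_val, smul_eq_C_mul,
          C_add, C_mul] at hw ⊢
        linear_combination hw)
      have e0 := h5 0
      have e1 := h5 1
      have e2 := h5 2
      simp only [Matrix.cons_val_zero, Matrix.cons_val_one, Matrix.cons_val] at e0 e1 e2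
      rw [e0, e1] at e2
      intro i
      fin_cases i
      · exact e0
      · exact e1
      · simpa using e2
    let f : Option (Option Unit) → Fin 3 := fun
      | none => 0
      | some none => 2
      | some (some _) => 1
    have hf : Function.Injective f := by decide
    have hvh : ∀ i : Fin 3, (![a i0 + C α * y, x + C γ * y, y] i).IsHomogeneous 1 := by
      intro i
      fin_cases i
      · exact (ha i0).add (by simpa using (isHomogeneous_C σ α).mul hy)
      · exact hx.add (by simpa using (isHomogeneous_C σ γ).mul hy)
      · exact hy
    refine caseA (a := a) (b := fun i => b i - C γ * a i) (x := x + C γ * y) (y := y)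
      (![a i0 + C α * y, x + C γ * y, y] ∘ f) (fun i => hvh _) (h4.comp f hf) hI ha ?_ () rfl
      (Or.inl rfl) i0 (β - α * γ) ?_ ?_ hc ?_
    · intro i
      exact (hb i).sub (by simpa using (isHomogeneous_C σ γ).mul (ha i))
    · rw [hq]
      change _ = (a i0 + C α * y) * (x + C γ * y) + C (β - α * γ) * y * y
      rw [← hg, C_sub, C_mul]
      ring
    · intro i _
      rw [hq]
      ring
    · change a i0 + C α * y ∉ p
      intro h
      exact hap ((p.add_mem_iff_left (p.mul_mem_left _ hyp)).1 h)
  · have h4 : LinearIndependent k ![b i0, a i0, x, y] := linearIndependent_finCons.2 ⟨h3, hB⟩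
    let f : Option (Option Bool) → Fin 4 := fun
      | none => 1
      | some none => 0
      | some (some false) => 2
      | some (some true) => 3
    have hf : Function.Injective f := by decide
    have hvh : ∀ i : Fin 4, (![b i0, a i0, x, y] i).IsHomogeneous 1 := by
      intro i
      fin_cases i
      · exact hb i0
      · exact ha i0
      · exact hx
      · exact hy
    refine caseA (a := a) (b := b) (x := x) (y := y)
      (![b i0, a i0, x, y] ∘ f) (fun i => hvh _) (h4.comp f hf) hI ha hb false rfl
      (Or.inr ⟨true, by decide, rfl⟩) i0 1 ?_ (fun i _ => hq i) hc hap
    rw [hq]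
    change _ = a i0 * x + C 1 * b i0 * y
    simp

/-- linearly dependent case. -/
lemma caseD {s : ℕ} {q a b : Fin s → MvPolynomial σ k} {x y : MvPolynomial σ k}
    (hxy : ¬ LinearIndependent k ![x, y])
    (ha : ∀ i, (a i).IsHomogeneous 1) (hb : ∀ i, (b i).IsHomogeneous 1)
    (hq : ∀ i, q i = a i * x + b i * y)
    {p : Ideal (MvPolynomial σ k)} [hp : p.IsPrime] (hc : IsCol p (Ideal.span (Set.range q))) :
    p.height ≤ (s : ℕ) := by
  have hkey : ∀ (d : MvPolynomial σ k) (l : Fin s → MvPolynomial σ k),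
      (∀ i, l i ∈ Aff σ k) → (∀ i, q i = d * l i) → p.height ≤ (s : ℕ) := by
    intro d l hl hql
    have : q = fun i => d * l i := funext hql
    rw [this] at hc
    simpa using key_div d l hl hc
  by_cases hx0 : y = 0
  · refine hkey x a (fun i => hom_one_aff (ha i)) (fun i => ?_)
    rw [hq, hx0]; ring
  · rw [LinearIndependent.pair_symm_iff, LinearIndependent.pair_iff' hx0] at hxy
    push Not at hxy
    obtain ⟨c, hcx⟩ := hxy
    refine hkey y (fun i => C c * a i + b i) (fun i => Submodule.add_mem _
      (C_mul_mem_aff _ (hom_one_aff (ha i))) (hom_one_aff (hb i))) (fun i => ?_)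
    rw [hq, ← hcx, smul_eq_C_mul]; ring

/-- all cases where some linear form is not in `p`. -/
lemma caseAll {s : ℕ} {q a b : Fin s → MvPolynomial σ k} {x y : MvPolynomial σ k}
    (hx : x.IsHomogeneous 1) (hy : y.IsHomogeneous 1)
    (ha : ∀ i, (a i).IsHomogeneous 1) (hb : ∀ i, (b i).IsHomogeneous 1)
    (hq : ∀ i, q i = a i * x + b i * y)
    {p : Ideal (MvPolynomial σ k)} [hp : p.IsPrime] (hc : IsCol p (Ideal.span (Set.range q)))
    (hne : ¬ (x ∈ p ∧ y ∈ p ∧ (∀ i, a i ∈ p) ∧ ∀ i, b i ∈ p)) : p.height ≤ (s : ℕ) := by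
  by_cases hxy : LinearIndependent k ![x, y]
  swap
  · exact caseD hxy ha hb hq hc
  have hyx : LinearIndependent k ![y, x] := LinearIndependent.pair_symm_iff.1 hxy
  have hq' : ∀ i, q i = b i * y + a i * x := fun i => by rw [hq]; ring
  by_cases hxp : x ∈ p
  swap
  · exact caseX hx hy hxy ha hb hq hc hxp
  by_cases hyp : y ∈ p
  swap
  · exact caseX hy hx hyx hb ha hq' hc hyp
  by_cases hap : ∀ i, a i ∈ p
  · by_cases hbp : ∀ i, b i ∈ p
    · exact absurd ⟨hxp, hyp, hap, hbp⟩ hne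
    · push Not at hbp
      obtain ⟨i0, h0⟩ := hbp
      exact caseC hy hx hyx hb ha hq' hc hyp hxp i0 h0
  · push Not at hap
    obtain ⟨i0, h0⟩ := hap
    exact caseC hx hy hxy ha hb hq hc hxp hyp i0 h0

end cases2
end QL

namespace QL
open MvPolynomial

attribute [local instance] MvPolynomial.gradedAlgebra

section final
variable {k : Type*} [Field k]

lemma sub_mem_of_X {τ R : Type*} [CommRing R] [Algebra k R] (f g : MvPolynomial τ k →ₐ[k] R)
    (J : Ideal R) (h : ∀ i, f (X i) - g (X i) ∈ J) (r : MvPolynomial τ k) : f r - g r ∈ J := by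
  have : (Ideal.Quotient.mkₐ k J).comp f = (Ideal.Quotient.mkₐ k J).comp g := by
    apply algHom_ext
    intro i
    exact Ideal.Quotient.eq.2 (h i)
  exact Ideal.Quotient.eq.1 (AlgHom.congr_fun this r)

lemma ker_eps {r : ℕ} (c : MvPolynomial (Fin r) k)
    (hc : aeval (fun _ : Fin r => (0 : k)) c = 0) : c ∈ Ideal.span (Set.range (X : Fin r → MvPolynomial (Fin r) k)) := by
  have h := sub_mem_of_X (AlgHom.id k (MvPolynomial (Fin r) k))
    ((Algebra.ofId k _).comp (aeval (fun _ : Fin r => (0 : k))))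
    (Ideal.span (Set.range (X : Fin r → MvPolynomial (Fin r) k))) (by
      intro i
      simp only [AlgHom.id_apply, AlgHom.comp_apply, aeval_X, map_zero, sub_zero]
      exact Ideal.subset_span ⟨i, rfl⟩) c
  simpa only [AlgHom.id_apply, AlgHom.comp_apply, hc, map_zero, sub_zero] using h

lemma eps_X {r : ℕ} (c : MvPolynomial (Fin r) k)
    (hc : c ∈ Ideal.span (Set.range (X : Fin r → MvPolynomial (Fin r) k))) :
    aeval (fun _ : Fin r => (0 : k)) c = 0 := by
  have : Ideal.span (Set.range (X : Fin r → MvPolynomial (Fin r) k)) ≤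
      RingHom.ker (aeval (fun _ : Fin r => (0 : k))) := by
    rw [Ideal.span_le]
    rintro _ ⟨i, rfl⟩
    simp
  exact this hc

variable {σ : Type} [Finite σ]

lemma eq_m {ν : Type} [Finite ν] (z : ν → MvPolynomial σ k) (hz : ∀ i, (z i).IsHomogeneous 1)
    {s : ℕ} (q : Fin s → MvPolynomial σ k) (hq : ∀ i, q i ∈ Algebra.adjoin k (Set.range z))
    {p : Ideal (MvPolynomial σ k)} [hp : p.IsPrime] (hc : IsCol p (Ideal.span (Set.range q)))
    (hzp : ∀ i, z i ∈ p) : p = Ideal.span (Set.range z) := by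
  classical
  obtain ⟨r, n, Φ, h1, h2, -⟩ := coords_span z hz
  let Ω := sumAlgEquiv k (Fin n) (Fin r)
  let Ψ := Φ.trans Ω
  have hX : ∀ j : Fin r, ∃ w ∈ Ideal.span (Set.range z), Ψ w = C (X j) := by
    intro j
    have : X (Sum.inr j) ∈ (Ideal.span (Set.range z)).map
        (Φ : MvPolynomial σ k →+* MvPolynomial (Fin n ⊕ Fin r) k) := by
      rw [h2]; exact Ideal.subset_span ⟨j, rfl⟩
    obtain ⟨w, hw, hw2⟩ := (Ideal.mem_map_iff_of_surjective _ Φ.surjective).1 this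
    refine ⟨w, hw, ?_⟩
    change Ω (Φ w) = _
    have hw3 : Φ w = X (Sum.inr j) := hw2
    rw [hw3]
    exact sumAlgEquiv_X_inr _ _ _ _
  have hadj : ∀ f ∈ Algebra.adjoin k (Set.range z), ∃ g, Ψ f = C g := by
    have hle : Algebra.adjoin k (Set.range z) ≤
        (IsScalarTower.toAlgHom k (MvPolynomial (Fin r) k)
          (MvPolynomial (Fin n) (MvPolynomial (Fin r) k))).range.comap Ψ.toAlgHom := by
      rw [Algebra.adjoin_le_iff]
      rintro _ ⟨i, rfl⟩
      have hle2 : Submodule.span k (Set.range fun j : Fin r => X (Sum.inr j)) ≤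
          (Subalgebra.toSubmodule ((IsScalarTower.toAlgHom k (MvPolynomial (Fin r) k)
          (MvPolynomial (Fin n) (MvPolynomial (Fin r) k))).range.comap Ω.toAlgHom)) := by
        rw [Submodule.span_le]
        rintro _ ⟨j, rfl⟩
        exact ⟨X j, (sumAlgEquiv_X_inr _ _ _ _).symm⟩
      exact hle2 (h1 i)
    intro f hf
    obtain ⟨g, hg⟩ := hle hf
    exact ⟨g, hg.symm⟩
  choose g hg using fun i => hadj _ (hq i)
  have hg1 := good_equiv Ψ.toRingEquiv hc
  have hpr := hg1.1
  have hspan : (Ideal.span (Set.range q)).map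
      (Ψ.toRingEquiv : MvPolynomial σ k →+* MvPolynomial (Fin n) (MvPolynomial (Fin r) k)) =
      (Ideal.span (Set.range g)).map C := by
    rw [map_span_range, map_span_range]
    congr 2
    funext i
    exact hg i
  have hcol := hg1.2.1
  rw [hspan] at hcol
  have hXp : ∀ w ∈ p, Ψ w ∈ p.map
      (Ψ.toRingEquiv : MvPolynomial σ k →+* MvPolynomial (Fin n) (MvPolynomial (Fin r) k)) := by
    intro w hw
    exact Ideal.mem_map_of_mem _ hw
  have hzle : Ideal.span (Set.range z) ≤ p := by
    rw [Ideal.span_le]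
    rintro _ ⟨i, rfl⟩
    exact hzp i
  have hm : ∀ c : MvPolynomial (Fin r) k, aeval (fun _ : Fin r => (0 : k)) c = 0 →
      (C c : MvPolynomial (Fin n) (MvPolynomial (Fin r) k)) ∈ p.map
      (Ψ.toRingEquiv : MvPolynomial σ k →+* MvPolynomial (Fin n) (MvPolynomial (Fin r) k)) := by
    intro c hc0
    have hle : Ideal.span (Set.range (X : Fin r → MvPolynomial (Fin r) k)) ≤ (p.map
      (Ψ.toRingEquiv : MvPolynomial σ k →+* MvPolynomial (Fin n) (MvPolynomial (Fin r) k))).comap C := by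
      rw [Ideal.span_le]
      rintro _ ⟨j, rfl⟩
      obtain ⟨w, hw, hw2⟩ := hX j
      change (C (X j) : MvPolynomial (Fin n) (MvPolynomial (Fin r) k)) ∈ p.map
        (Ψ.toRingEquiv : MvPolynomial σ k →+* MvPolynomial (Fin n) (MvPolynomial (Fin r) k))
      rw [← hw2]
      exact hXp w (hzle hw)
    exact hle (ker_eps c hc0)
  refine le_antisymm ?_ hzle
  intro f hf
  have h5 := extended_prime (aeval (fun _ : Fin r => (0 : k))) hcol hm (Ψ f) (hXp f hf)
  have h6 : Ψ f ∈ (Ideal.span (Set.range (X : Fin r → MvPolynomial (Fin r) k))).map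
      (C : _ →+* MvPolynomial (Fin n) (MvPolynomial (Fin r) k)) := by
    rw [mem_map_C_iff]
    intro m
    exact ker_eps _ (h5 m)
  have h7 : (Ideal.span (Set.range (X : Fin r → MvPolynomial (Fin r) k))).map
      (C : _ →+* MvPolynomial (Fin n) (MvPolynomial (Fin r) k)) ≤
      (Ideal.span (Set.range z)).map
      (Ψ.toRingEquiv : MvPolynomial σ k →+* MvPolynomial (Fin n) (MvPolynomial (Fin r) k)) := by
    rw [map_span_range, Ideal.span_le]
    rintro _ ⟨j, rfl⟩
    obtain ⟨w, hw, hw2⟩ := hX j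
    change (C (X j) : MvPolynomial (Fin n) (MvPolynomial (Fin r) k)) ∈ (Ideal.span (Set.range z)).map
      (Ψ.toRingEquiv : MvPolynomial σ k →+* MvPolynomial (Fin n) (MvPolynomial (Fin r) k))
    rw [← hw2]
    exact Ideal.mem_map_of_mem _ hw
  obtain ⟨w, hw, hw2⟩ := mem_map_equiv Ψ.toRingEquiv (h7 h6)
  have : w = f := Ψ.injective hw2
  rwa [← this]

theorem thmT {s : ℕ} {q a b : Fin s → MvPolynomial σ k} {x y : MvPolynomial σ k}
    (hx : x.IsHomogeneous 1) (hy : y.IsHomogeneous 1)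
    (ha : ∀ i, (a i).IsHomogeneous 1) (hb : ∀ i, (b i).IsHomogeneous 1)
    (hq : ∀ i, q i = a i * x + b i * y)
    {p : Ideal (MvPolynomial σ k)} [hp : p.IsPrime] (hc : IsCol p (Ideal.span (Set.range q)))
    (hne : p ≠ Ideal.span ({x, y} ∪ Set.range a ∪ Set.range b)) : p.height ≤ (s : ℕ) := by
  refine caseAll hx hy ha hb hq hc ?_
  rintro ⟨hxp, hyp, hap, hbp⟩
  apply hne
  let z : (Bool ⊕ Fin s) ⊕ Fin s → MvPolynomial σ k :=
    Sum.elim (Sum.elim (fun c => if c then x else y) a) b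
  have hr : Set.range z = {x, y} ∪ Set.range a ∪ Set.range b := by
    simp only [z, Set.Sum.elim_range]
    congr 2
    ext w
    constructor
    · rintro ⟨c, rfl⟩
      cases c <;> simp
    · rintro (rfl | rfl)
      · exact ⟨true, by simp⟩
      · exact ⟨false, by simp⟩
  rw [← hr]
  have hzx : x ∈ Set.range z := ⟨Sum.inl (Sum.inl true), rfl⟩
  have hzy : y ∈ Set.range z := ⟨Sum.inl (Sum.inl false), rfl⟩
  have hza : ∀ i, a i ∈ Set.range z := fun i => ⟨Sum.inl (Sum.inr i), rfl⟩
  have hzb : ∀ i, b i ∈ Set.range z := fun i => ⟨Sum.inr i, rfl⟩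
  refine eq_m z ?_ q ?_ hc ?_
  · rintro (((_ | _) | i) | i)
    · exact hy
    · exact hx
    · exact ha i
    · exact hb i
  · intro i
    rw [hq]
    exact Subalgebra.add_mem _
      (Subalgebra.mul_mem _ (Algebra.subset_adjoin (hza i)) (Algebra.subset_adjoin hzx))
      (Subalgebra.mul_mem _ (Algebra.subset_adjoin (hzb i)) (Algebra.subset_adjoin hzy))
  · rintro (((_ | _) | i) | i)
    · exact hyp
    · exact hxp
    · exact hap i
    · exact hbp i

/-- killing linear forms. -/
lemma kill {u : ℕ} (z : Fin u → MvPolynomial σ k) (hz : ∀ i, (z i).IsHomogeneous 1) :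
    ∃ (n : ℕ) (Θ : MvPolynomial σ k →ₐ[k] MvPolynomial (Fin n) k), Function.Surjective Θ ∧
      RingHom.ker Θ.toRingHom = Ideal.span (Set.range z) ∧
      ∀ l : MvPolynomial σ k, l.IsHomogeneous 1 → (Θ l).IsHomogeneous 1 := by
  obtain ⟨r, n, Φ, h1, h2, h3⟩ := coords_span z hz
  let φ : MvPolynomial (Fin n ⊕ Fin r) k →ₐ[k] MvPolynomial (Fin n) k := aeval (Sum.elim X 0)
  let ψ : MvPolynomial (Fin n) k →ₐ[k] MvPolynomial (Fin n ⊕ Fin r) k := rename Sum.inl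
  have hφψ : ∀ r, φ (ψ r) = r := by
    intro r
    have : φ.comp ψ = AlgHom.id k _ := by
      apply algHom_ext
      intro i
      simp [φ, ψ]
    exact AlgHom.congr_fun this r
  have hker : ∀ w, φ w = 0 → w ∈ Ideal.span (Set.range fun j : Fin r =>
      (X (Sum.inr j) : MvPolynomial (Fin n ⊕ Fin r) k)) := by
    intro w hw
    have := sub_mem_of_X (AlgHom.id k _) (ψ.comp φ) (Ideal.span (Set.range fun j : Fin r =>
      (X (Sum.inr j) : MvPolynomial (Fin n ⊕ Fin r) k))) (by
        rintro (i | j)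
        · simp [φ, ψ]
        · simp only [φ, ψ, AlgHom.id_apply, AlgHom.comp_apply, aeval_X, Sum.elim_inr,
            Pi.zero_apply, map_zero, sub_zero]
          exact Ideal.subset_span ⟨j, rfl⟩) w
    simpa only [AlgHom.id_apply, AlgHom.comp_apply, hw, map_zero, sub_zero] using this
  refine ⟨n, φ.comp Φ.toAlgHom, ?_, ?_, ?_⟩
  · intro w
    obtain ⟨w', hw'⟩ := Φ.surjective (ψ w)
    refine ⟨w', ?_⟩
    change φ (Φ w') = w
    rw [hw', hφψ]
  · apply le_antisymm
    · intro w hw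
      have hw1 : φ (Φ w) = 0 := hw
      have hw2 := hker _ hw1
      rw [← h2] at hw2
      obtain ⟨w', hw', hww⟩ := (Ideal.mem_map_iff_of_surjective _ Φ.surjective).1 hw2
      have : w' = w := Φ.injective hww
      rwa [← this]
    · rw [Ideal.span_le]
      rintro _ ⟨i, rfl⟩
      change φ (Φ (z i)) = 0
      have hle : Submodule.span k (Set.range fun j : Fin r => X (Sum.inr j)) ≤
          LinearMap.ker φ.toLinearMap := by
        rw [Submodule.span_le]
        rintro _ ⟨j, rfl⟩
        simp [φ]
      exact hle (h1 i)
  · intro l hl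
    change (φ (Φ l)).IsHomogeneous 1
    refine hom_one_induction (P := fun w => (φ w).IsHomogeneous 1) ?_ ?_ ?_ ?_ (h3 l hl)
    · rintro (i | j)
      · simpa [φ] using isHomogeneous_X k i
      · simpa [φ] using isHomogeneous_zero (Fin n) k 1
    · simpa using isHomogeneous_zero (Fin n) k 1
    · intro a b ha hb
      rw [map_add]; exact ha.add hb
    · intro c a ha
      rw [map_smul]; exact (homogeneousSubmodule (Fin n) k 1).smul_mem c ha

theorem main {s u : ℕ} {q a b : Fin s → MvPolynomial σ k} {x y : MvPolynomial σ k}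
    (hx : x.IsHomogeneous 1) (hy : y.IsHomogeneous 1)
    (ha : ∀ i, (a i).IsHomogeneous 1) (hb : ∀ i, (b i).IsHomogeneous 1)
    (hq : ∀ i, q i = a i * x + b i * y)
    (z : Fin u → MvPolynomial σ k) (hz : ∀ i, (z i).IsHomogeneous 1)
    {p : Ideal (MvPolynomial σ k)} [hp : p.IsPrime]
    (hc : IsCol p (Ideal.span (Set.range q) ⊔ Ideal.span (Set.range z)))
    (hne : p ≠ Ideal.span ({x, y} ∪ Set.range a ∪ Set.range b ∪ Set.range z)) :
    p.height ≤ (s + u : ℕ) := by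
  obtain ⟨n, Θ, hs, hk, hh⟩ := kill z hz
  have hkI : RingHom.ker Θ.toRingHom ≤ Ideal.span (Set.range q) ⊔ Ideal.span (Set.range z) := by
    rw [hk]; exact le_sup_right
  have hkp := hkI.trans hc.le
  obtain ⟨h1, h2⟩ := height_surj Θ.toRingHom hs hkp u (by
    rw [hk]
    refine (Submodule.spanFinrank_span_le_ncard_of_finite (Set.finite_range z)).trans ?_
    rw [← Set.image_univ]
    refine (Set.ncard_image_le Set.finite_univ).trans ?_
    simp [Set.ncard_univ])
  have hc2 := hc.map_surj _ hs hkI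
  have hz0 : ∀ w ∈ Set.range z, Θ w = 0 := by
    intro w hw
    have : w ∈ RingHom.ker Θ.toRingHom := by rw [hk]; exact Ideal.subset_span hw
    exact this
  have hzb : (Ideal.span (Set.range z)).map Θ.toRingHom = ⊥ := by
    rw [← hk, Ideal.map_eq_bot_iff_le_ker]
  rw [Ideal.map_sup, hzb, sup_bot_eq, map_span_range] at hc2
  have h3 : (p.map Θ.toRingHom).height ≤ (s : ℕ) := by
    refine thmT (q := fun i => Θ (q i)) (a := fun i => Θ (a i)) (b := fun i => Θ (b i))
      (hh x hx) (hh y hy) (fun i => hh _ (ha i)) (fun i => hh _ (hb i)) ?_ hc2 ?_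
    · intro i
      rw [hq, map_add, map_mul, map_mul]
    · intro heq
      apply hne
      set m := Ideal.span ({x, y} ∪ Set.range a ∪ Set.range b ∪ Set.range z) with hm
      have hkm : RingHom.ker Θ.toRingHom ≤ m := by
        rw [hk]; exact Ideal.span_mono Set.subset_union_right
      have hmm : m.map Θ.toRingHom = p.map Θ.toRingHom := by
        rw [heq, hm, Ideal.span_union, Ideal.map_sup, hzb, sup_bot_eq, Ideal.map_span,
          Set.image_union, Set.image_union, Set.image_pair, ← Set.range_comp, ← Set.range_comp]
        rfl
      have e1 := Ideal.comap_map_of_surjective Θ.toRingHom hs p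
      have e2 := Ideal.comap_map_of_surjective Θ.toRingHom hs m
      rw [hmm, e1] at e2
      change p ⊔ RingHom.ker Θ.toRingHom = m ⊔ RingHom.ker Θ.toRingHom at e2
      rwa [sup_eq_left.2 hkp, sup_eq_left.2 hkm] at e2
  calc p.height ≤ _ := h2
    _ ≤ (s : ℕ) + (u : ℕ) := by gcongr
    _ = _ := by push_cast; rfl

end final
end QL

/-- Let `x, y` be linearly independent linear forms, `q_1, …, q_s` quadrics
in `(x, y)` with `q_i = a_i x + b_i y`, and `z_1, …, z_u` (`u ≥ 1`) linear forms generating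
an ideal of height at least `1`. Set `H = (q_1, …, q_s) + (z_1, …, z_u)` and
`m = (x, y, a_1, …, a_s, b_1, …, b_s, z_1, …, z_u)`. Then every associated prime `p ≠ m` of
`S/H` satisfies `height p ≤ s + u`. -/
theorem height_le_of_assoc_prime_quadrics_plus_linears
    (k : Type u) [Field k] (N : ℕ) (s u' : ℕ) (hu : 1 ≤ u')
    (x y : MvPolynomial (Fin N) k)
    (hx : x.IsHomogeneous 1) (hy : y.IsHomogeneous 1)
    (hxy : LinearIndependent k ![x, y])
    (q a b : Fin s → MvPolynomial (Fin N) k)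
    (hq2 : ∀ i, (q i).IsHomogeneous 2)
    (hqxy : ∀ i, q i ∈ Ideal.span ({x, y} : Set (MvPolynomial (Fin N) k)))
    (ha : ∀ i, (a i).IsHomogeneous 1) (hb : ∀ i, (b i).IsHomogeneous 1)
    (hqab : ∀ i, q i = a i * x + b i * y)
    (z : Fin u' → MvPolynomial (Fin N) k)
    (hz : ∀ i, (z i).IsHomogeneous 1)
    (hzht : 1 ≤ (Ideal.span (Set.range z)).heightENat)
    (H : Ideal (MvPolynomial (Fin N) k))
    (hH : H = Ideal.span (Set.range q) ⊔ Ideal.span (Set.range z))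
    (m : Ideal (MvPolynomial (Fin N) k))
    (hm : m = Ideal.span ({x, y} ∪ Set.range a ∪ Set.range b ∪ Set.range z))
    (p : Ideal (MvPolynomial (Fin N) k))
    (hp : IsAssociatedPrime p (MvPolynomial (Fin N) k ⧸ H))
    (hpm : p ≠ m) :
    p.heightENat ≤ (s + u' : ℕ) := by
  have hp' := isAssociatedPrime_iff.1 hp
  obtain ⟨hprime, f, hf⟩ := hp'
  obtain ⟨f, rfl⟩ := Ideal.Quotient.mk_surjective f
  have hcol : QL.IsCol p H := by
    refine ⟨f, fun r => ?_⟩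
    rw [hf, Submodule.mem_colon_singleton, Submodule.mem_bot, ← Ideal.Quotient.eq_zero_iff_mem,
      map_mul]
    rfl
  rw [hH] at hcol
  rw [hm] at hpm
  have h := QL.main hx hy ha hb hqab z hz hcol hpm
  refine le_trans ?_ h
  rw [Ideal.heightENat]
  refine (iInf₂_le (⟨p, hprime⟩ : PrimeSpectrum _) le_rfl).trans ?_
  rw [← PrimeSpectrum.height_eq_orderHeight]
end
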